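/- arXiv:2301.03120 — 4 statements merged into one kernel-verified Lean document; each statement's English description precedes it below -/
import Mathlib

section
/- Let ((n_1, K, d_1))_{D_1} and ((n_2, K, d_2))_{D_2} be two QMDS codes with the same code-space dimension K > 1, i.e., K-dimensional r_1-uniform and r_2-uniform subspaces of (C^{D_1})^{⊗n_1} and (C^{D_2})^{⊗n_2} respectively, where r_1 = d_1 − 1, r_2 = d_2 − 1, K = D_1^{n_1−2r_1} = D_2^{n_2−2r_2}. Then there exists an l-uniform unit vector in the (n_1+n_2)-partite space (C^{D_1})^{⊗n_1} ⊗ (C^{D_2})^{⊗n_2} with l = min(n_1 − r_1, n_2 − r_2, r_1 + r_2 + 1). Explicitly, if V_1, V_2 are isometries from C^K onto the two code spaces and φ ∈ C^K ⊗ C^K is any maximally entangled state, then (V_1 ⊗ V_2)φ is such an l-uniform state. -/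
/-!
Common definitions: multipartite systems with parties indexed by a finite type `ι`,
local dimensions `d : ι → ℕ`, vectors as functions on the configuration space,
partial traces, and `r`-uniform states and subspaces.
-/

open scoped ComplexConjugate Matrix

namespace RUnif

variable {ι : Type} [Fintype ι] [DecidableEq ι]

/-- Configuration space (computational basis index set) of the multipartite system
`ℂ^{d i₁} ⊗ ... ⊗ ℂ^{d iₙ}`. -/
abbrev Cfg (d : ι → ℕ) : Type := ∀ i, Fin (d i)

/-- The multipartite Hilbert space `ℂ^{d i₁} ⊗ ... ⊗ ℂ^{d iₙ}`, realized as functions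
on the configuration space. -/
abbrev H (d : ι → ℕ) : Type := Cfg d → ℂ

/-- The standard hermitian inner product `⟪φ, ψ⟫`. -/
noncomputable def dotc (d : ι → ℕ) (φ ψ : H d) : ℂ :=
  ∑ x, conj (φ x) * ψ x

/-- The rank-one operator `|ψ⟩⟨φ|` as a matrix. -/
noncomputable def dyad (d : ι → ℕ) (ψ φ : H d) : Matrix (Cfg d) (Cfg d) ℂ :=
  Matrix.of fun x y => ψ x * conj (φ y)

/-- Configurations of the parties inside `S`. -/
abbrev SubCfg (d : ι → ℕ) (S : Finset ι) : Type := ∀ i : S, Fin (d i.1)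

/-- Configurations of the parties outside `S`. -/
abbrev CoCfg (d : ι → ℕ) (S : Finset ι) : Type := ∀ i : {j : ι // j ∉ S}, Fin (d i.1)

/-- Merge a configuration of the parties in `S` with one of the parties outside `S`. -/
def merge (d : ι → ℕ) (S : Finset ι) (a : SubCfg d S) (c : CoCfg d S) : Cfg d :=
  fun i => if h : i ∈ S then a ⟨i, h⟩ else c ⟨i, h⟩

/-- Partial trace over the parties *outside* `S` (i.e. `Tr_{Sᶜ}`), leaving an operator
on the parties in `S`. -/
noncomputable def ptr (d : ι → ℕ) (S : Finset ι) (M : Matrix (Cfg d) (Cfg d) ℂ) :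
    Matrix (SubCfg d S) (SubCfg d S) ℂ :=
  Matrix.of fun a b => ∑ c : CoCfg d S, M (merge d S a c) (merge d S b c)

/-- The maximally mixed state `(1/d_S) I_S` on the parties in `S`. -/
noncomputable def unifMix (d : ι → ℕ) (S : Finset ι) :
    Matrix (SubCfg d S) (SubCfg d S) ℂ :=
  (∏ i : S, (d i.1 : ℂ))⁻¹ • 1

/-- `ψ` is a unit vector. -/
def IsUnitVec (d : ι → ℕ) (ψ : H d) : Prop := dotc d ψ ψ = 1

/-- `ψ` is `r`-uniform: every reduction to `r` parties is maximally mixed. -/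
def IsUniform (d : ι → ℕ) (r : ℕ) (ψ : H d) : Prop :=
  ∀ S : Finset ι, S.card = r → ptr d S (dyad d ψ ψ) = unifMix d S

/-- A subspace is `r`-uniform if every unit vector in it is an `r`-uniform state. -/
def IsUniformSubspace (d : ι → ℕ) (r : ℕ) (W : Submodule ℂ (H d)) : Prop :=
  ∀ ψ ∈ W, IsUnitVec d ψ → IsUniform d r ψ

end RUnif

namespace RUnif

variable {ι : Type} [Fintype ι] [DecidableEq ι]

/-- Unnormalised partial trace, written with full configurations. -/
noncomputable def Ered (d : ι → ℕ) (S : Finset ι) (P : Cfg d → Cfg d → ℂ) (x y : Cfg d) : ℂ :=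
  ∑ z : Cfg d, P (S.piecewise x z) (S.piecewise y z)

lemma sum_swap (d : ι → ℕ) (T : Finset ι) (F : Cfg d → ℂ) :
    ∑ w : Cfg d, ∑ z : Cfg d, F (T.piecewise w z) = (Fintype.card (Cfg d) : ℂ) * ∑ z, F z := by
  have h : ∑ p : Cfg d × Cfg d, F (T.piecewise p.1 p.2) = ∑ p : Cfg d × Cfg d, F p.1 := by
    refine Fintype.sum_bijective
      (fun p : Cfg d × Cfg d => ((T.piecewise p.1 p.2, T.piecewise p.2 p.1) : Cfg d × Cfg d)) ?_ _ _
      (fun p => rfl)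
    apply Function.Involutive.bijective
    rintro ⟨a, b⟩
    ext i <;> by_cases hi : i ∈ T <;> simp [Finset.piecewise, hi]
  rw [← Fintype.sum_prod_type', h, Fintype.sum_prod_type]
  simp [Finset.mul_sum]

lemma Ered_mono (d : ι → ℕ) (S T : Finset ι) (hST : S ⊆ T) (P : Cfg d → Cfg d → ℂ) (k : ℂ)
    (hT : ∀ x y, Ered d T P x y = if (∀ i ∈ T, x i = y i) then k else 0) (x y : Cfg d) :
    Ered d S P x y = if (∀ i ∈ S, x i = y i) then k else 0 := by
  have hN : (Fintype.card (Cfg d) : ℂ) ≠ 0 := by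
    have : Nonempty (Cfg d) := ⟨x⟩
    exact_mod_cast Fintype.card_ne_zero
  apply mul_left_cancel₀ hN
  unfold Ered
  rw [← sum_swap d T (fun z => P (S.piecewise x z) (S.piecewise y z))]
  have h : ∀ w : Cfg d, ∑ z : Cfg d, P (S.piecewise x (T.piecewise w z))
      (S.piecewise y (T.piecewise w z)) = if (∀ i ∈ S, x i = y i) then k else 0 := by
    intro w
    have h2 := hT (S.piecewise x w) (S.piecewise y w)
    have e : ∀ u z : Cfg d, S.piecewise u (T.piecewise w z) = T.piecewise (S.piecewise u w) z := by
      intro u z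
      ext i
      by_cases hi : i ∈ S
      · simp [Finset.piecewise, hi, hST hi]
      · by_cases hi' : i ∈ T <;> simp [Finset.piecewise, hi, hi']
    simp only [e]
    unfold Ered at h2
    rw [h2]
    congr 1
    apply propext
    constructor
    · intro h i hi
      simpa [hi] using h i (hST hi)
    · intro h i _
      by_cases hi : i ∈ S <;> simp [hi]
      exact h i hi
  simp only [h]
  simp

/-- Splitting of configurations. -/
def mergeEquiv (d : ι → ℕ) (S : Finset ι) : SubCfg d S × CoCfg d S ≃ Cfg d where
  toFun p := merge d S p.1 p.2
  invFun x := (fun i => x i.1, fun i => x i.1)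
  left_inv := by
    rintro ⟨a, c⟩
    refine Prod.ext ?_ ?_
    · funext i
      simp [merge]
    · funext i
      simp [merge, i.2]
  right_inv := by
    intro x
    funext i
    by_cases hi : i ∈ S <;> simp [merge, hi]

lemma piecewise_merge (d : ι → ℕ) (S : Finset ι) (x : Cfg d) (a : SubCfg d S) (c : CoCfg d S) :
    S.piecewise x (merge d S a c) = merge d S (fun i => x i.1) c := by
  funext i
  by_cases hi : i ∈ S <;> simp [merge, hi]

lemma piecewise_compl_merge (d : ι → ℕ) (S : Finset ι) (x : Cfg d) (a : SubCfg d S)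
    (c : CoCfg d S) :
    Sᶜ.piecewise x (merge d S a c) = merge d S a (fun i => x i.1) := by
  funext i
  by_cases hi : i ∈ S <;> simp [merge, hi]

lemma Ered_eq (d : ι → ℕ) (S : Finset ι) (P : Cfg d → Cfg d → ℂ) (x y : Cfg d) :
    Ered d S P x y = (∏ i : S, (d i.1 : ℂ)) *
      ptr d S (Matrix.of P) (fun i => x i.1) (fun i => y i.1) := by
  unfold Ered
  rw [← (mergeEquiv d S).sum_comp, Fintype.sum_prod_type]
  simp [mergeEquiv, piecewise_merge, ptr]

lemma Ered_compl_eq (d : ι → ℕ) (S : Finset ι) (P : Cfg d → Cfg d → ℂ) (x y : Cfg d) :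
    Ered d Sᶜ P x y = (Fintype.card (CoCfg d S) : ℂ) * ∑ a : SubCfg d S,
      P (merge d S a (fun i => x i.1)) (merge d S a (fun i => y i.1)) := by
  unfold Ered
  rw [← (mergeEquiv d S).sum_comp, Fintype.sum_prod_type]
  simp only [mergeEquiv, Equiv.coe_fn_mk, piecewise_compl_merge, Finset.sum_const,
    Finset.mul_sum, Finset.card_univ, nsmul_eq_mul]

lemma ptr_iff (d : ι → ℕ) (hd : ∀ i, d i ≠ 0) (S : Finset ι) (P : Cfg d → Cfg d → ℂ) :
    ptr d S (Matrix.of P) = unifMix d S ↔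
    ∀ x y, Ered d S P x y = if (∀ i ∈ S, x i = y i) then 1 else 0 := by
  have hN : (∏ i : S, (d i.1 : ℂ)) ≠ 0 :=
    Finset.prod_ne_zero_iff.2 fun i _ => by exact_mod_cast hd i.1
  have key : ∀ x y : Cfg d, (unifMix d S (fun i => x i.1) (fun i => y i.1) : ℂ) =
      (∏ i : S, (d i.1 : ℂ))⁻¹ * if (∀ i ∈ S, x i = y i) then 1 else 0 := by
    intro x y
    simp only [unifMix, Matrix.smul_apply, Matrix.one_apply, smul_eq_mul]
    congr 2
    simp [funext_iff]
  constructor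
  · intro h x y
    rw [Ered_eq, h, key, mul_inv_cancel_left₀ hN]
  · intro h
    ext a b
    have c : CoCfg d S := fun i => ⟨0, Nat.pos_of_ne_zero (hd i.1)⟩
    have h3 := h (merge d S a c) (merge d S b c)
    have h4 := key (merge d S a c) (merge d S b c)
    have e : ∀ a : SubCfg d S, (fun i : S => merge d S a c i.1) = a := by
      intro a; funext i; simp [merge]
    rw [Ered_eq] at h3
    rw [e a, e b] at h3 h4
    rw [h4, ← h3, inv_mul_cancel_left₀ hN]

/-- From a uniform subspace: polarised form. -/
lemma uniform_polar (d : ι → ℕ) (hd : ∀ i, d i ≠ 0) (r : ℕ) (W : Submodule ℂ (H d))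
    (hW : IsUniformSubspace d r W) (S : Finset ι) (hS : S.card = r) (u v : H d)
    (hu : u ∈ W) (hv : v ∈ W) (x y : Cfg d) :
    Ered d S (fun p q => u p * conj (v q)) x y =
      if (∀ i ∈ S, x i = y i) then dotc d v u else 0 := by
  set k : ℂ := if (∀ i ∈ S, x i = y i) then 1 else 0 with hk
  let B : H d → H d → ℂ := fun u v =>
    ∑ z, u (S.piecewise x z) * conj (v (S.piecewise y z)) - k * ∑ z, u z * conj (v z)
  have Badd1 : ∀ u u' v, B (u + u') v = B u v + B u' v := by
    intro u u' v
    simp only [B, Pi.add_apply, add_mul, Finset.sum_add_distrib]; ring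
  have Badd2 : ∀ u v v', B u (v + v') = B u v + B u v' := by
    intro u u' v
    simp only [B, Pi.add_apply, mul_add, map_add, Finset.sum_add_distrib]; ring
  have Bs1 : ∀ (c : ℂ) u v, B (c • u) v = c * B u v := by
    intro c u v
    simp only [B, Pi.smul_apply, smul_eq_mul, mul_assoc, ← Finset.mul_sum]; ring
  have Bs2 : ∀ (c : ℂ) u v, B u (c • v) = conj c * B u v := by
    intro c u v
    simp only [B, Pi.smul_apply, smul_eq_mul, map_mul, mul_left_comm _ (conj c), ← Finset.mul_sum]
    ring
  have Bdiag : ∀ w ∈ W, B w w = 0 := by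
    intro w hw
    by_cases h0 : w = 0
    · simp [B, h0]
    let s : ℝ := ∑ z, Complex.normSq (w z)
    have hs : 0 < s := by
      obtain ⟨z, hz⟩ := Function.ne_iff.1 h0
      exact Finset.sum_pos' (fun _ _ => Complex.normSq_nonneg _)
        ⟨z, Finset.mem_univ _, Complex.normSq_pos.2 hz⟩
    have hsc : (s : ℂ) = ∑ z, w z * conj (w z) := by
      simp [s, Complex.mul_conj]
    let c : ℂ := ((Real.sqrt s)⁻¹ : ℝ)
    have hcc : c * conj c * s = 1 := by
      simp only [c, Complex.conj_ofReal]
      norm_cast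
      rw [← mul_inv, Real.mul_self_sqrt hs.le, inv_mul_cancel₀ hs.ne']
    have hun : ∑ z, (c • w) z * conj ((c • w) z) = 1 := by
      rw [← hcc, hsc, Finset.mul_sum]
      refine Finset.sum_congr rfl fun z _ => ?_
      simp; ring
    have h1 : IsUniform d r (c • w) := by
      apply hW _ (W.smul_mem _ hw)
      unfold IsUnitVec dotc
      rw [← hun]
      exact Finset.sum_congr rfl fun z _ => mul_comm _ _
    have h2 := (ptr_iff d hd S _).1 (h1 S hS) x y
    have h3 : B (c • w) (c • w) = 0 := by
      simp only [B]
      rw [hun, mul_one, hk, ← h2]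
      exact sub_self _
    rw [Bs1, Bs2, ← mul_assoc] at h3
    rcases mul_eq_zero.1 h3 with h | h
    · rw [h] at hcc; simp at hcc
    · exact h
  have e1 := Bdiag _ (W.add_mem hu hv)
  have e2 := Bdiag _ (W.add_mem hu (W.smul_mem Complex.I hv))
  simp only [Badd1, Badd2, Bs1, Bs2, Bdiag u hu, Bdiag v hv, Complex.conj_I] at e1 e2
  have e3 : B u v = 0 := by
    have hI := Complex.I_mul_I
    linear_combination (1/2 : ℂ) * e1 + (Complex.I / 2) * e2 + (1/2) * (B u v - B v u) * hI
  have e4 : Ered d S (fun p q => u p * conj (v q)) x y = k * ∑ z, u z * conj (v z) := by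
    exact sub_eq_zero.1 e3
  rw [e4, hk]
  unfold dotc
  simp only [mul_comm (conj (v _))]
  split_ifs <;> simp

/-- Code with an isometry, reductions to at most `r` parties. -/
lemma code_small (d : ι → ℕ) (hd : ∀ i, d i ≠ 0) (r K : ℕ) (W : Submodule ℂ (H d))
    (hW : IsUniformSubspace d r W) (V : Matrix (Cfg d) (Fin K) ℂ)
    (hV : Vᴴ * V = 1) (hran : LinearMap.range V.mulVecLin = W) (hr : r ≤ Fintype.card ι)
    (S : Finset ι) (hS : S.card ≤ r) (a b : Fin K) (x y : Cfg d) :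
    Ered d S (fun p q => V p a * conj (V q b)) x y =
      if (∀ i ∈ S, x i = y i) then (if a = b then 1 else 0) else 0 := by
  obtain ⟨T, hST, hT⟩ := Finset.exists_superset_card_eq hS hr
  apply Ered_mono d S T hST
  intro x y
  have mem : ∀ a, (fun p => V p a) ∈ W := by
    intro a
    rw [← hran]
    refine ⟨Pi.single a 1, ?_⟩
    simp [Matrix.col_def]
    rfl
  have h := uniform_polar d hd r W hW T hT _ _ (mem a) (mem b) x y
  rw [h]
  congr 1
  have h2 := congrFun (congrFun hV b) a
  simp only [Matrix.mul_apply, Matrix.conjTranspose_apply, Matrix.one_apply] at h2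
  unfold dotc
  simp only [@eq_comm _ a b]
  exact h2

/-- Code with an isometry, reductions of the code projector. -/
lemma code_large (d : ι → ℕ) (n D r K : ℕ) (hn : Fintype.card ι = n) (hd : ∀ i, d i = D)
    (hD : D ≠ 0) (W : Submodule ℂ (H d))
    (hW : IsUniformSubspace d r W)
    (V : Matrix (Cfg d) (Fin K) ℂ)
    (hV : Vᴴ * V = 1) (hran : LinearMap.range V.mulVecLin = W) (hr : 2 * r ≤ n)
    (hK : K = D ^ (n - 2 * r))
    (S : Finset ι) (hS : S.card ≤ n - r) (x y : Cfg d) :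
    Ered d S (fun p q => ∑ a, V p a * conj (V q a)) x y =
      if (∀ i ∈ S, x i = y i) then (K : ℂ) else 0 := by
  have hd0 : ∀ i, d i ≠ 0 := fun i => by rw [hd i]; exact hD
  obtain ⟨B, hSB, hB⟩ := Finset.exists_superset_card_eq hS (by omega)
  apply Ered_mono d S B hSB
  clear x y
  intro x y
  obtain ⟨C, rfl⟩ : ∃ C : Finset ι, Cᶜ = B := ⟨Bᶜ, compl_compl B⟩
  have hC : C.card = r := by
    have h1 := C.card_compl
    have h2 := C.card_le_univ
    rw [hn] at h1 h2
    omega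
  let M : Matrix (SubCfg d C × Fin K) (CoCfg d C) ℂ := Matrix.of fun p c => V (merge d C p.1 c) p.2
  have hprod : (∏ i : C, (d i.1 : ℂ)) = (D : ℂ) ^ r := by simp [hd, hC]
  have hDr : (D : ℂ) ^ r ≠ 0 := pow_ne_zero _ (by exact_mod_cast hD)
  have c0 : CoCfg d C := fun i => ⟨0, Nat.pos_of_ne_zero (hd0 i.1)⟩
  have hM : M * (((D : ℂ) ^ r) • Mᴴ) = 1 := by
    ext ⟨s, a⟩ ⟨t, b⟩
    have h := code_small d hd0 r K W hW V hV hran (by omega) C hC.le a b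
      (merge d C s c0) (merge d C t c0)
    have e : ∀ a : SubCfg d C, (fun i : C => merge d C a c0 i.1) = a := by
      intro a; funext i; simp [merge]
    rw [Ered_eq, e, e, hprod] at h
    have h5 : (∀ i ∈ C, merge d C s c0 i = merge d C t c0 i) ↔ s = t := by
      constructor
      · intro h
        funext i
        simpa [merge] using h i.1 i.2
      · rintro rfl; simp
    simp only [h5] at h
    rw [Matrix.mul_smul, Matrix.smul_apply, smul_eq_mul, Matrix.mul_apply]
    simp only [Matrix.one_apply, Prod.mk.injEq, ite_and]
    rw [← h]
    rfl
  have hcardCo : Fintype.card (CoCfg d C) = D ^ (n - r) := by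
    simp [hd, hC, hn]
  have hcard : Fintype.card (SubCfg d C × Fin K) = Fintype.card (CoCfg d C) := by
    rw [hcardCo, Fintype.card_prod]
    simp only [Fintype.card_pi, Fintype.card_fin, hd, Finset.prod_const, Finset.card_univ,
      Fintype.card_coe, hC]
    rw [hK, ← pow_add]
    congr 1; omega
  have hM2 : (((D : ℂ) ^ r) • Mᴴ) * M = 1 := (Matrix.mul_eq_one_comm_of_card_eq _ _ _ hcard).1 hM
  have h6 := congrFun (congrFun hM2 (fun i : {j // j ∉ C} => y i.1))
    (fun i : {j // j ∉ C} => x i.1)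
  rw [Matrix.smul_mul, Matrix.smul_apply, smul_eq_mul, Matrix.mul_apply, Matrix.one_apply,
    Fintype.sum_prod_type] at h6
  rw [Ered_compl_eq, hcardCo]
  have h7 : ((fun i : {j // j ∉ C} => y i.1) = fun i : {j // j ∉ C} => x i.1) ↔ ∀ i ∈ Cᶜ, x i = y i := by
    rw [funext_iff]
    simp [eq_comm]
  simp only [h7] at h6
  have h8 : ((D ^ (n - r) : ℕ) : ℂ) = K * (D : ℂ) ^ r := by
    rw [hK]; push_cast; rw [← pow_add]; congr 1; omega
  rw [h8, mul_assoc]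
  have h9 : (D : ℂ) ^ r * ∑ a : SubCfg d C, ∑ k, V (merge d C a fun i => x i.1) k *
      conj (V (merge d C a fun i => y i.1) k) = if ∀ i ∈ Cᶜ, x i = y i then 1 else 0 := by
    rw [← h6]
    congr 1
    refine Finset.sum_congr rfl fun s _ => Finset.sum_congr rfl fun k _ => ?_
    rw [mul_comm]; rfl
  rw [h9]
  split_ifs <;> simp

lemma alg_core (K : ℕ) (φ : Matrix (Fin K) (Fin K) ℂ) (hK : (K : ℂ) ≠ 0)
    (hφ : φᴴ * φ = ((K : ℂ))⁻¹ • 1) (e1 e2 : Fin K → Fin K → ℂ) (P Q : Prop)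
    {_ : Decidable P} {_ : Decidable Q}
    (h1 : ∀ a b, e1 a b = if P then (if a = b then 1 else 0) else 0)
    (h2 : ∑ b, e2 b b = if Q then (K : ℂ) else 0) :
    ∑ a, ∑ b, ∑ a', ∑ b', e1 a a' * e2 b b' * (φ a b * conj (φ a' b')) =
      if P ∧ Q then 1 else 0 := by
  by_cases hP : P
  · have h3 : ∀ b b', ∑ a, φ a b * conj (φ a b') = if b' = b then (K : ℂ)⁻¹ else 0 := by
      intro b b'
      have := congrFun (congrFun hφ b') b
      simp only [Matrix.mul_apply, Matrix.conjTranspose_apply, Matrix.smul_apply,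
        Matrix.one_apply, smul_eq_mul, mul_ite, mul_one, mul_zero] at this
      rw [← this]
      exact Finset.sum_congr rfl fun z _ => mul_comm _ _
    have : ∑ a, ∑ b, ∑ a', ∑ b', e1 a a' * e2 b b' * (φ a b * conj (φ a' b')) =
        ∑ b, ∑ b', e2 b b' * ∑ a, φ a b * conj (φ a b') := by
      rw [Finset.sum_comm]
      refine Finset.sum_congr rfl fun b _ => ?_
      simp only [Finset.mul_sum]
      rw [Finset.sum_comm (f := fun b' a => e2 b b' * (φ a b * conj (φ a b')))]
      refine Finset.sum_congr rfl fun a _ => ?_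
      rw [Finset.sum_eq_single a]
      · simp [h1, hP]
      · intro a' _ ha
        simp [h1, ha.symm]
      · simp
    rw [this]
    simp only [h3, mul_ite, mul_zero, Finset.sum_ite_eq', Finset.mem_univ, if_true,
      ← Finset.sum_mul, h2, hP, true_and]
    split_ifs <;> simp [hK]
  · simp [h1, hP]

lemma sum_alg {α β : Type} [Fintype α] [Fintype β] (K : ℕ) (φ : Matrix (Fin K) (Fin K) ℂ)
    (f f' : α → Fin K → ℂ) (g g' : β → Fin K → ℂ) :
    ∑ p : α × β, (∑ a, ∑ b, f p.1 a * g p.2 b * φ a b) *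
      conj (∑ a, ∑ b, f' p.1 a * g' p.2 b * φ a b) =
    ∑ a, ∑ b, ∑ a', ∑ b', (∑ z, f z a * conj (f' z a')) * (∑ z, g z b * conj (g' z b')) *
      (φ a b * conj (φ a' b')) := by
  have swap4 : ∀ F : α × β → Fin K → Fin K → Fin K → Fin K → ℂ,
      ∑ p, ∑ a, ∑ b, ∑ a', ∑ b', F p a b a' b' = ∑ a, ∑ b, ∑ a', ∑ b', ∑ p, F p a b a' b' := by
    intro F
    rw [Finset.sum_comm]
    refine Finset.sum_congr rfl fun a _ => ?_
    rw [Finset.sum_comm]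
    refine Finset.sum_congr rfl fun b _ => ?_
    rw [Finset.sum_comm]
    refine Finset.sum_congr rfl fun a' _ => ?_
    rw [Finset.sum_comm]
  have e : ∀ a b a' b', (∑ z, f z a * conj (f' z a')) * (∑ z, g z b * conj (g' z b')) *
      (φ a b * conj (φ a' b')) = ∑ p : α × β, (f p.1 a * g p.2 b * φ a b) *
        conj (f' p.1 a' * g' p.2 b' * φ a' b') := by
    intro a b a' b'
    rw [Finset.sum_mul_sum, ← Fintype.sum_prod_type', Finset.sum_mul]
    refine Finset.sum_congr rfl fun p _ => ?_
    simp only [map_mul]; ring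
  simp only [e]
  rw [← swap4]
  refine Finset.sum_congr rfl fun p _ => ?_
  simp only [map_sum, Finset.sum_mul]
  refine Finset.sum_congr rfl fun a _ => Finset.sum_congr rfl fun b _ => ?_
  simp only [Finset.mul_sum]

lemma Ered_sum (n1 n2 : ℕ) (d1 : Fin n1 → ℕ) (d2 : Fin n2 → ℕ) (K : ℕ)
    (V1 : Matrix (Cfg d1) (Fin K) ℂ) (V2 : Matrix (Cfg d2) (Fin K) ℂ)
    (φ : Matrix (Fin K) (Fin K) ℂ) (χ : H (Sum.elim d1 d2))
    (hχ : χ = (fun x => ∑ a : Fin K, ∑ b : Fin K,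
        V1 (fun i => x (Sum.inl i)) a * V2 (fun j => x (Sum.inr j)) b * φ a b))
    (S : Finset (Fin n1 ⊕ Fin n2)) (x y : Cfg (Sum.elim d1 d2)) :
    Ered (Sum.elim d1 d2) S (fun p q => χ p * conj (χ q)) x y =
    ∑ a, ∑ b, ∑ a', ∑ b',
      Ered d1 S.toLeft (fun p q => V1 p a * conj (V1 q a')) (fun i => x (Sum.inl i))
        (fun i => y (Sum.inl i)) *
      Ered d2 S.toRight (fun p q => V2 p b * conj (V2 q b')) (fun i => x (Sum.inr i))
        (fun i => y (Sum.inr i)) * (φ a b * conj (φ a' b')) := by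
  have hl : ∀ (x z : Cfg (Sum.elim d1 d2)), (fun i => S.piecewise x z (Sum.inl i)) =
      (S.toLeft.piecewise (fun i => x (Sum.inl i)) (fun i => z (Sum.inl i)) : Cfg d1) := by
    intro x z; funext i; simp [Finset.piecewise]
  have hr : ∀ (x z : Cfg (Sum.elim d1 d2)), (fun i => S.piecewise x z (Sum.inr i)) =
      (S.toRight.piecewise (fun i => x (Sum.inr i)) (fun i => z (Sum.inr i)) : Cfg d2) := by
    intro x z; funext i; simp [Finset.piecewise]
  unfold Ered
  rw [← sum_alg]
  refine Fintype.sum_equiv (Equiv.sumPiEquivProdPi (fun i => Fin (Sum.elim d1 d2 i))) _ _ ?_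
  intro z
  have hz : ∀ x : Cfg (Sum.elim d1 d2), χ (S.piecewise x z) = ∑ a : Fin K, ∑ b : Fin K,
      V1 (S.toLeft.piecewise (fun i => x (Sum.inl i)) (fun i => z (Sum.inl i)) : Cfg d1) a *
      V2 (S.toRight.piecewise (fun i => x (Sum.inr i)) (fun i => z (Sum.inr i)) : Cfg d2) b *
      φ a b := by
    intro x
    rw [← hl x z, ← hr x z, hχ]
  exact congrArg₂ (fun u v => u * conj v) (hz x) (hz y)

end RUnif

open RUnif in
/-- Given two QMDS codes `((n₁, K, d₁))_{D₁}` and `((n₂, K, d₂))_{D₂}`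
(`K > 1`, `rᵢ = dᵢ - 1`), isometries `V₁, V₂` from `ℂ^K` onto their code spaces, and a
maximally entangled `φ ∈ ℂ^K ⊗ ℂ^K`, the vector `(V₁ ⊗ V₂)φ` is an `l`-uniform unit
vector of the `(n₁+n₂)`-partite system with `l = min(n₁-r₁, n₂-r₂, r₁+r₂+1)`. -/
theorem statement7 (n1 n2 D1 D2 r1 r2 K : ℕ)
    (hQ1 : K = D1 ^ (n1 - 2 * r1)) (h1 : 2 * r1 ≤ n1)
    (hQ2 : K = D2 ^ (n2 - 2 * r2)) (h2 : 2 * r2 ≤ n2)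
    (hK : 1 < K)
    (W1 : Submodule ℂ (H (fun _ : Fin n1 => D1)))
    (hW1 : IsUniformSubspace (fun _ : Fin n1 => D1) r1 W1)
    (hdim1 : Module.finrank ℂ W1 = K)
    (W2 : Submodule ℂ (H (fun _ : Fin n2 => D2)))
    (hW2 : IsUniformSubspace (fun _ : Fin n2 => D2) r2 W2)
    (hdim2 : Module.finrank ℂ W2 = K)
    (V1 : Matrix (Cfg (fun _ : Fin n1 => D1)) (Fin K) ℂ)
    (hV1 : V1ᴴ * V1 = 1) (hran1 : LinearMap.range V1.mulVecLin = W1)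
    (V2 : Matrix (Cfg (fun _ : Fin n2 => D2)) (Fin K) ℂ)
    (hV2 : V2ᴴ * V2 = 1) (hran2 : LinearMap.range V2.mulVecLin = W2)
    (φ : Matrix (Fin K) (Fin K) ℂ)
    (hφ1 : φ * φᴴ = ((K : ℂ))⁻¹ • 1) (hφ2 : φᴴ * φ = ((K : ℂ))⁻¹ • 1) :
    ∀ χ : H (Sum.elim (fun _ : Fin n1 => D1) (fun _ : Fin n2 => D2)),
      χ = (fun x => ∑ a : Fin K, ∑ b : Fin K,
        V1 (fun i => x (Sum.inl i)) a * V2 (fun j => x (Sum.inr j)) b * φ a b) →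
      IsUnitVec (Sum.elim (fun _ : Fin n1 => D1) (fun _ : Fin n2 => D2)) χ ∧
      IsUniform (Sum.elim (fun _ : Fin n1 => D1) (fun _ : Fin n2 => D2))
        (min (n1 - r1) (min (n2 - r2) (r1 + r2 + 1))) χ := by
  intro χ hχ
  have hD1 : D1 ≠ 0 := by
    rintro rfl
    rcases Nat.eq_zero_or_pos (n1 - 2 * r1) with h | h
    · rw [h] at hQ1; simp at hQ1; omega
    · rw [zero_pow h.ne'] at hQ1; omega
  have hD2 : D2 ≠ 0 := by
    rintro rfl
    rcases Nat.eq_zero_or_pos (n2 - 2 * r2) with h | h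
    · rw [h] at hQ2; simp at hQ2; omega
    · rw [zero_pow h.ne'] at hQ2; omega
  have hKc : (K : ℂ) ≠ 0 := by exact_mod_cast (by omega : K ≠ 0)
  have hd : ∀ i, Sum.elim (fun _ : Fin n1 => D1) (fun _ : Fin n2 => D2) i ≠ 0 := by
    rintro (i | i)
    · exact hD1
    · exact hD2
  -- the core claim
  have main : ∀ S : Finset (Fin n1 ⊕ Fin n2),
      S.card ≤ min (n1 - r1) (min (n2 - r2) (r1 + r2 + 1)) → ∀ x y,
      Ered (Sum.elim (fun _ : Fin n1 => D1) (fun _ : Fin n2 => D2)) S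
        (fun p q => χ p * conj (χ q)) x y = if (∀ i ∈ S, x i = y i) then 1 else 0 := by
    intro S hS x y
    have hcard := S.card_toLeft_add_card_toRight
    have hA : S.toLeft.card ≤ n1 - r1 := by omega
    have hB : S.toRight.card ≤ n2 - r2 := by omega
    obtain ⟨x1, hx1⟩ : ∃ u : Cfg (fun _ : Fin n1 => D1), u = fun i => x (Sum.inl i) := ⟨_, rfl⟩
    obtain ⟨y1, hy1⟩ : ∃ u : Cfg (fun _ : Fin n1 => D1), u = fun i => y (Sum.inl i) := ⟨_, rfl⟩
    obtain ⟨x2, hx2⟩ : ∃ u : Cfg (fun _ : Fin n2 => D2), u = fun i => x (Sum.inr i) := ⟨_, rfl⟩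
    obtain ⟨y2, hy2⟩ : ∃ u : Cfg (fun _ : Fin n2 => D2), u = fun i => y (Sum.inr i) := ⟨_, rfl⟩
    have hiff : (∀ i ∈ S, x i = y i) ↔
        (∀ i ∈ S.toLeft, x1 i = y1 i) ∧ (∀ i ∈ S.toRight, x2 i = y2 i) := by
      subst hx1 hy1 hx2 hy2
      constructor
      · intro h
        exact ⟨fun i hi => h _ (Finset.mem_toLeft.1 hi), fun i hi => h _ (Finset.mem_toRight.1 hi)⟩
      · rintro ⟨ha, hb⟩ (i | i) hi
        · exact ha i (Finset.mem_toLeft.2 hi)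
        · exact hb i (Finset.mem_toRight.2 hi)
    have E := Ered_sum n1 n2 _ _ K V1 V2 φ χ hχ S x y
    rw [← hx1, ← hy1, ← hx2, ← hy2] at E
    rw [E]
    clear E hx1 hy1 hx2 hy2
    have L1 := code_large (fun _ : Fin n1 => D1) n1 D1 r1 K (by simp) (fun _ => rfl) hD1 W1 hW1 V1
      hV1 hran1 h1 hQ1 S.toLeft hA x1 y1
    have L2 := code_large (fun _ : Fin n2 => D2) n2 D2 r2 K (by simp) (fun _ => rfl) hD2 W2 hW2 V2
      hV2 hran2 h2 hQ2 S.toRight hB x2 y2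
    unfold Ered at L1 L2
    rw [Finset.sum_comm] at L1 L2
    rcases (by omega : S.toLeft.card ≤ r1 ∨ S.toRight.card ≤ r2) with h | h
    · have Sm := fun a b => code_small (fun _ : Fin n1 => D1) (fun _ => hD1) r1 K W1 hW1 V1 hV1
        hran1 (by simp; omega) S.toLeft h a b x1 y1
      refine (alg_core K φ hKc hφ2 _ (fun b b' => Ered (fun _ : Fin n2 => D2) S.toRight
        (fun p q => V2 p b * conj (V2 q b')) x2 y2) _ _ Sm L2).trans ?_
      by_cases hh : ∀ i ∈ S, x i = y i
      · rw [if_pos hh, if_pos (hiff.1 hh)]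
      · rw [if_neg hh, if_neg (fun h => hh (hiff.2 h))]
    · have Sm := fun a b => code_small (fun _ : Fin n2 => D2) (fun _ => hD2) r2 K W2 hW2 V2 hV2
        hran2 (by simp; omega) S.toRight h a b x2 y2
      have hφt : (φᵀ)ᴴ * φᵀ = ((K : ℂ))⁻¹ • 1 := by
        have := congrArg Matrix.transpose hφ1
        rw [Matrix.transpose_mul, Matrix.transpose_smul, Matrix.transpose_one] at this
        exact this
      have := alg_core K φᵀ hKc hφt _ (fun b b' => Ered (fun _ : Fin n1 => D1) S.toLeft
        (fun p q => V1 p b * conj (V1 q b')) x1 y1) _ _ Sm L1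
      rw [Finset.sum_comm]
      refine Eq.trans ?_ (this.trans ?_)
      · refine Finset.sum_congr rfl fun b _ => Finset.sum_congr rfl fun a _ => ?_
        rw [Finset.sum_comm]
        refine Finset.sum_congr rfl fun b' _ => Finset.sum_congr rfl fun a' _ => ?_
        simp only [Matrix.transpose_apply]
        congr 1
        exact mul_comm _ _
      · by_cases hh : ∀ i ∈ S, x i = y i
        · rw [if_pos hh, if_pos (hiff.1 hh).symm]
        · rw [if_neg hh, if_neg (fun h => hh (hiff.2 h.symm))]
  refine ⟨?_, ?_⟩
  · have x0 : Cfg (Sum.elim (fun _ : Fin n1 => D1) (fun _ : Fin n2 => D2)) :=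
      fun i => ⟨0, Nat.pos_of_ne_zero (hd i)⟩
    have h := main ∅ (by simp) x0 x0
    unfold Ered at h
    simp only [Finset.piecewise_empty] at h
    unfold IsUnitVec dotc
    simp only [mul_comm (conj (χ _))]
    rw [h]
    simp
  · intro S hS
    exact (ptr_iff _ hd S _).2 (main S hS.le)
end

section
/- Let ((n_1, K, d_1))_{D_1} and ((n_2, K, d_2))_{D_2} be two QMDS codes with the same code-space dimension K > 1, and set r_1 = d_1 − 1, r_2 = d_2 − 1. Then for any integers α, β with 0 ≤ α ≤ r_1 and 0 ≤ β ≤ r_2, there exists an l-uniform subspace W of (C^{D_1})^{⊗(n_1−α)} ⊗ (C^{D_2})^{⊗(n_2−β)} with dim(W) = D_1^α · D_2^β and l = min(n_1 − r_1 − α, n_2 − r_2 − β, r_1 + r_2 + 1 − α − β). -/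
/-!
Common definitions: multipartite systems with parties indexed by a finite type `ι`,
local dimensions `d : ι → ℕ`, vectors as functions on the configuration space,
partial traces, and `r`-uniform states and subspaces.
-/

open scoped ComplexConjugate Matrix

namespace RUnif

set_option linter.unusedSectionVars false
set_option linter.unusedSimpArgs false

variable {ι : Type} [Fintype ι] [DecidableEq ι]

/-- Indicator that `a` and `b` agree on `S`. -/
noncomputable def ag (d : ι → ℕ) (S : Finset ι) (a b : Cfg d) : ℂ :=
  open Classical in if ∀ i ∈ S, a i = b i then 1 else 0

/-- Overcounted partial trace. -/
noncomputable def RR (d : ι → ℕ) (S : Finset ι) (M : Matrix (Cfg d) (Cfg d) ℂ) (a b : Cfg d) : ℂ :=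
  ∑ c : Cfg d, M (S.piecewise a c) (S.piecewise b c)

lemma RR_eq_ptr (d : ι → ℕ) (S : Finset ι) (M : Matrix (Cfg d) (Cfg d) ℂ) (a b : Cfg d) :
    RR d S M a b = (∏ i : S, (d i.1 : ℂ)) * ptr d S M (fun i => a i.1) (fun i => b i.1) := by
  unfold RR
  rw [← (Equiv.piEquivPiSubtypeProd (· ∈ S) (fun i => Fin (d i))).symm.sum_comp,
    Fintype.sum_prod_type]
  have key : ∀ (a : Cfg d) (u : ∀ i : {x // x ∈ S}, Fin (d i)) (w : CoCfg d S),
      S.piecewise a ((Equiv.piEquivPiSubtypeProd (· ∈ S) (fun i => Fin (d i))).symm (u, w))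
        = merge d S (fun i => a i.1) w := by
    intro a u w
    funext i
    by_cases h : i ∈ S <;> simp [merge, h, Equiv.piEquivPiSubtypeProd]
  have : ∀ (u : ∀ i : {x // x ∈ S}, Fin (d i)), (∑ w : CoCfg d S,
      M (S.piecewise a ((Equiv.piEquivPiSubtypeProd (· ∈ S) (fun i => Fin (d i))).symm (u, w)))
       (S.piecewise b ((Equiv.piEquivPiSubtypeProd (· ∈ S) (fun i => Fin (d i))).symm (u, w))))
       = ptr d S M (fun i => a i.1) (fun i => b i.1) := by
    intro u
    simp only [key, ptr, Matrix.of_apply]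
  rw [Finset.sum_congr rfl (fun u _ => this u)]
  simp

lemma sum_pw (d : ι → ℕ) (S : Finset ι) (F : Cfg d → ℂ) :
    ∑ c : Cfg d, ∑ c' : Cfg d, F (S.piecewise c c') = Fintype.card (Cfg d) * ∑ c, F c := by
  let e : Cfg d × Cfg d ≃ Cfg d × Cfg d :=
    { toFun := fun p => (S.piecewise p.1 p.2, S.piecewise p.2 p.1)
      invFun := fun p => (S.piecewise p.1 p.2, S.piecewise p.2 p.1)
      left_inv := by
        rintro ⟨p, q⟩
        ext i <;> by_cases h : i ∈ S <;> simp [h]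
      right_inv := by
        rintro ⟨p, q⟩
        ext i <;> by_cases h : i ∈ S <;> simp [h] }
  rw [← Fintype.sum_prod_type']
  have h := e.sum_comp (fun p : Cfg d × Cfg d => F p.1)
  refine h.trans ?_
  rw [Fintype.sum_prod_type]
  simp [Finset.mul_sum]

lemma RR_mono (d : ι → ℕ) (S T : Finset ι) (hTS : T ⊆ S) (M : Matrix (Cfg d) (Cfg d) ℂ) (k : ℂ)
    (h : ∀ a b, RR d S M a b = k * ag d S a b) (a b : Cfg d) :
    RR d T M a b = k * ag d T a b := by
  have hc : (Fintype.card (Cfg d) : ℂ) ≠ 0 := by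
    have : Nonempty (Cfg d) := ⟨a⟩
    exact_mod_cast Fintype.card_ne_zero
  apply mul_left_cancel₀ hc
  unfold RR
  rw [← sum_pw d S (fun c => M (T.piecewise a c) (T.piecewise b c))]
  have key : ∀ a c c' : Cfg d, T.piecewise a (S.piecewise c c') = S.piecewise (T.piecewise a c) c' := by
    intro a c c'
    funext i
    by_cases h : i ∈ T
    · simp [h, hTS h]
    · by_cases h' : i ∈ S <;> simp [h, h']
  have : ∀ c, ∑ c', M (T.piecewise a (S.piecewise c c')) (T.piecewise b (S.piecewise c c'))
      = k * ag d T a b := by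
    intro c
    simp only [key]
    have := h (T.piecewise a c) (T.piecewise b c)
    unfold RR at this
    rw [this]
    congr 1
    unfold ag
    congr 1
    apply propext
    constructor
    · intro h i hi
      simpa [hi] using h i (hTS hi)
    · intro h i hi
      by_cases h' : i ∈ T
      · simp [h', h i h']
      · simp [h']
  simp [this]

lemma ag_eq (d : ι → ℕ) (S : Finset ι) (a b : Cfg d) :
    ag d S a b = (1 : Matrix (SubCfg d S) (SubCfg d S) ℂ) (fun i => a i.1) (fun i => b i.1) := by
  rw [Matrix.one_apply, ag]
  congr 1
  apply propext
  constructor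
  · intro h; funext i; exact h i.1 i.2
  · intro h i hi; exact congrFun h ⟨i, hi⟩

lemma prod_ne (d : ι → ℕ) (S : Finset ι) (a : Cfg d) : (∏ i : S, (d i.1 : ℂ)) ≠ 0 := by
  rw [Finset.prod_ne_zero_iff]
  intro i _
  have := (a i.1).pos
  exact_mod_cast this.ne'

/-- polarisation -/
lemma ptr_polar (d : ι → ℕ) (r : ℕ) (W : Submodule ℂ (H d)) (hW : IsUniformSubspace d r W)
    (S : Finset ι) (hS : S.card = r) (ψ φ : H d) (hψ : ψ ∈ W) (hφ : φ ∈ W) (u v : SubCfg d S) :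
    ptr d S (dyad d ψ φ) u v = dotc d φ ψ * unifMix d S u v := by
  let B : H d → H d → ℂ := fun ψ φ => ptr d S (dyad d ψ φ) u v - dotc d φ ψ * unifMix d S u v
  have hadd1 : ∀ x y z, B (x + y) z = B x z + B y z := by
    intro x y z
    simp only [B, ptr, dyad, dotc, Matrix.of_apply, Pi.add_apply, add_mul, mul_add, Finset.sum_add_distrib]
    ring
  have hadd2 : ∀ x y z, B z (x + y) = B z x + B z y := by
    intro x y z
    simp only [B, ptr, dyad, dotc, Matrix.of_apply, Pi.add_apply, add_mul, mul_add, map_add, Finset.sum_add_distrib]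
    ring
  have hsm1 : ∀ (c : ℂ) x z, B (c • x) z = c * B x z := by
    intro c x z
    simp only [B, ptr, dyad, dotc, Matrix.of_apply, Pi.smul_apply, smul_eq_mul, mul_sub, ← mul_assoc, Finset.mul_sum]
    congr 2
    exact Finset.sum_congr rfl fun _ _ => by ring
  have hsm2 : ∀ (c : ℂ) x z, B z (c • x) = conj c * B z x := by
    intro c x z
    simp only [B, ptr, dyad, dotc, Matrix.of_apply, Pi.smul_apply, smul_eq_mul, mul_sub, ← mul_assoc, Finset.mul_sum, map_mul]
    congr 1
    exact Finset.sum_congr rfl fun _ _ => by ring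
  have hdiag : ∀ x ∈ W, B x x = 0 := by
    intro x hx
    by_cases hx0 : x = 0
    · have := hsm1 0 x x
      simp only [zero_smul, zero_mul] at this
      rw [hx0] at this ⊢
      exact this
    · let N : ℝ := ∑ y, Complex.normSq (x y)
      have hN : dotc d x x = (N : ℂ) := by
        simp only [dotc, N, Complex.ofReal_sum]
        refine Finset.sum_congr rfl fun _ _ => ?_
        rw [mul_comm, Complex.mul_conj]
      have hNpos : 0 < N := by
        obtain ⟨y, hy⟩ := Function.ne_iff.mp hx0
        exact Finset.sum_pos' (fun _ _ => Complex.normSq_nonneg _)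
          ⟨y, Finset.mem_univ _, Complex.normSq_pos.mpr hy⟩
      let c : ℂ := ((Real.sqrt N)⁻¹ : ℝ)
      have hc0 : c ≠ 0 := by
        simp only [c, ne_eq, Complex.ofReal_eq_zero, inv_eq_zero]
        exact (Real.sqrt_pos.mpr hNpos).ne'
      have hcc : conj c = c := Complex.conj_ofReal _
      have hunit : IsUnitVec d (c • x) := by
        unfold IsUnitVec
        have : dotc d (c • x) (c • x) = c * c * dotc d x x := by
          simp only [dotc, Pi.smul_apply, smul_eq_mul, map_mul, hcc, Finset.mul_sum]
          exact Finset.sum_congr rfl fun _ _ => by ring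
        rw [this, hN]
        simp only [c]
        norm_cast
        rw [← mul_inv, Real.mul_self_sqrt hNpos.le]
        exact inv_mul_cancel₀ hNpos.ne'
      have h := hW (c • x) (W.smul_mem c hx) hunit S hS
      have h0 : B (c • x) (c • x) = 0 := by
        simp only [B]
        rw [h, show dotc d (c • x) (c • x) = 1 from hunit]
        ring
      rw [hsm1, hsm2, hcc] at h0
      simpa [hc0] using h0
  have e1 : B ψ φ + B φ ψ = 0 := by
    have h := hdiag (ψ + φ) (W.add_mem hψ hφ)
    rw [hadd1, hadd2, hadd2, hdiag ψ hψ, hdiag φ hφ] at h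
    simpa using h
  have e2 : B ψ φ - B φ ψ = 0 := by
    have h := hdiag (ψ + Complex.I • φ) (W.add_mem hψ (W.smul_mem _ hφ))
    rw [hadd1, hadd2, hadd2, hdiag ψ hψ, hsm1, hsm1, hsm2, hsm2, hdiag φ hφ, Complex.conj_I] at h
    have h' : -Complex.I * (B ψ φ - B φ ψ) = 0 := by linear_combination h
    simpa using h'
  have : B ψ φ = 0 := by linear_combination (e1 + e2) / 2
  exact sub_eq_zero.mp this

lemma RR_polar (d : ι → ℕ) (r : ℕ) (W : Submodule ℂ (H d)) (hW : IsUniformSubspace d r W)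
    (S : Finset ι) (hS : S.card = r) (ψ φ : H d) (hψ : ψ ∈ W) (hφ : φ ∈ W) (a b : Cfg d) :
    RR d S (dyad d ψ φ) a b = dotc d φ ψ * ag d S a b := by
  rw [RR_eq_ptr, ptr_polar d r W hW S hS ψ φ hψ hφ, ag_eq, unifMix, Matrix.smul_apply, smul_eq_mul]
  have := prod_ne d S a
  field_simp

lemma exists_onb (d : ι → ℕ) (W : Submodule ℂ (H d)) (K : ℕ) (hK : Module.finrank ℂ W = K) :
    ∃ φ : Fin K → H d, (∀ i, φ i ∈ W) ∧ ∀ i j, dotc d (φ i) (φ j) = if i = j then 1 else 0 := by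
  let e := (WithLp.linearEquiv 2 ℂ (Cfg d → ℂ)).symm
  let W' : Submodule ℂ (EuclideanSpace ℂ (Cfg d)) := W.map (e : (Cfg d → ℂ) →ₗ[ℂ] _)
  have hd : Module.finrank ℂ W' = K := by
    rw [← hK]; exact LinearEquiv.finrank_map_eq e W
  let b := (stdOrthonormalBasis ℂ W').reindex (finCongr hd)
  refine ⟨fun i => e.symm (b i : EuclideanSpace ℂ (Cfg d)), ?_, ?_⟩
  · intro i
    obtain ⟨x, hx, hx'⟩ := (b i).2
    show e.symm (b i : EuclideanSpace ℂ (Cfg d)) ∈ W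
    rw [← hx']
    simpa using hx
  · intro i j
    have := orthonormal_iff_ite.mp b.orthonormal i j
    rw [← this, Submodule.coe_inner, PiLp.inner_apply]
    simp only [dotc, RCLike.inner_apply]
    refine Finset.sum_congr rfl fun x _ => ?_
    rw [mul_comm]
    rfl

lemma RR_sub (d : ι → ℕ) (r : ℕ) (W : Submodule ℂ (H d)) (hW : IsUniformSubspace d r W)
    (hr : r ≤ Fintype.card ι) (T : Finset ι) (hT : T.card ≤ r)
    (ψ φ : H d) (hψ : ψ ∈ W) (hφ : φ ∈ W) (a b : Cfg d) :
    RR d T (dyad d ψ φ) a b = dotc d φ ψ * ag d T a b := by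
  obtain ⟨S, hTS, hS⟩ := Finset.exists_superset_card_eq hT hr
  exact RR_mono d S T hTS _ _ (RR_polar d r W hW S hS ψ φ hψ hφ) a b

lemma qmds (D r K : ℕ) (d : ι → ℕ) (hd : d = fun _ => D) (hr : 2 * r ≤ Fintype.card ι) (hK : K = D ^ (Fintype.card ι - 2 * r))
    (hD : 0 < D)
    (W : Submodule ℂ (H d)) (hW : IsUniformSubspace d r W)
    (φ : Fin K → H d) (hφ : ∀ i, φ i ∈ W)
    (ho : ∀ i j, dotc d (φ i) (φ j) = if i = j then 1 else 0)
    (T : Finset ι) (hT : T.card ≤ Fintype.card ι - r) (a b : Cfg d) :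
    RR d T (∑ i, dyad _ (φ i) (φ i)) a b = K * ag _ T a b := by
  obtain ⟨S, hTS, hS⟩ := Finset.exists_superset_card_eq hT (by omega)
  refine RR_mono _ S T hTS _ _ ?_ a b
  clear a b
  intro a b
  have hS' : (Sᶜ).card = r := by rw [Finset.card_compl]; omega
  let M : Matrix (Fin K × SubCfg d Sᶜ) (CoCfg d Sᶜ) ℂ :=
    Matrix.of fun p w => φ p.1 (merge d Sᶜ p.2 w)
  have hDr : (D : ℂ) ^ r ≠ 0 := pow_ne_zero _ (by exact_mod_cast hD.ne')
  have h1 : M * ((D : ℂ) ^ r • Mᴴ) = 1 := by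
    ext ⟨i, u⟩ ⟨j, v⟩
    have := ptr_polar d r W hW Sᶜ hS' (φ i) (φ j) (hφ i) (hφ j) u v
    rw [ho] at this
    simp only [ptr, dyad, Matrix.of_apply, unifMix] at this
    rw [Matrix.mul_smul, Matrix.smul_apply, Matrix.mul_apply]
    simp only [M, Matrix.conjTranspose_apply, Matrix.of_apply]
    simp only [starRingEnd_apply] at this
    rw [this]
    simp only [hd, Finset.prod_const, Finset.card_univ, Fintype.card_coe, hS', Matrix.smul_apply,
      Matrix.one_apply, smul_eq_mul, Prod.mk.injEq]
    by_cases hij : i = j <;> by_cases huv : u = v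
    · subst hij; subst huv; simp [hDr]
    · simp [huv]
    · have : ¬ j = i := fun h => hij h.symm
      simp [hij, this]
    · simp [huv]
  have hcard : Fintype.card (Fin K × SubCfg d Sᶜ) = Fintype.card (CoCfg d Sᶜ) := by
    have e1 : Fintype.card {x // x ∉ Sᶜ} = Fintype.card ι - r := by
      rw [Fintype.card_subtype_compl, Fintype.card_coe, hS']
    simp only [Fintype.card_prod, Fintype.card_fin, Fintype.card_pi, hd, Finset.prod_const,
      Finset.card_univ, Fintype.card_coe, hS', e1]
    rw [hK, ← pow_add]
    congr 1
    omega
  have h2 : ((D : ℂ) ^ r • Mᴴ) * M = 1 := (Matrix.mul_eq_one_comm_of_card_eq (R := ℂ) (A := M) (eq := hcard)).mp h1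
  have h3 := congrFun (congrFun h2 (fun i => b i.1)) (fun i => a i.1)
  rw [Matrix.smul_mul, Matrix.smul_apply, Matrix.mul_apply, Fintype.sum_prod_type] at h3
  simp only [M, Matrix.conjTranspose_apply, Matrix.of_apply, Matrix.one_apply] at h3
  have key : ∀ (a : Cfg d) (u : ∀ i : {x // x ∈ Sᶜ}, Fin (d i)) (w : CoCfg d Sᶜ),
      S.piecewise a ((Equiv.piEquivPiSubtypeProd (· ∈ Sᶜ) (fun i => Fin (d i))).symm (u, w))
        = merge d Sᶜ u (fun i => a i.1) := by
    intro a u w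
    funext i
    by_cases h : i ∈ S <;> simp [merge, h, Equiv.piEquivPiSubtypeProd]
  unfold RR
  rw [← (Equiv.piEquivPiSubtypeProd (· ∈ Sᶜ) (fun i => Fin (d i))).symm.sum_comp,
    Fintype.sum_prod_type]
  simp only [key, Matrix.sum_apply, dyad, Matrix.of_apply, Finset.sum_const, Finset.card_univ]
  have hc2 : (Fintype.card (CoCfg d Sᶜ) : ℂ) = K * D ^ r := by
    rw [← hcard]; simp [hd, hS', Finset.card_univ]
  rw [← Finset.smul_sum, Finset.sum_comm, nsmul_eq_mul, hc2, mul_assoc]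
  congr 1
  have hag : ag d S a b = if (fun i : {x // x ∉ Sᶜ} => b i.1) = (fun i : {x // x ∉ Sᶜ} => a i.1) then 1 else 0 := by
    unfold ag
    congr 1
    apply propext
    constructor
    · intro h; funext i; exact (h i.1 (by simpa using i.2)).symm
    · intro h i hi; exact (congrFun h ⟨i, by simpa using hi⟩).symm
  rw [hag, ← h3, smul_eq_mul]
  congr 1
  refine Finset.sum_congr rfl fun i _ => Finset.sum_congr rfl fun u _ => ?_
  rw [mul_comm, starRingEnd_apply]

section two

variable {ι₁ ι₂ : Type} [Fintype ι₁] [DecidableEq ι₁] [Fintype ι₂] [DecidableEq ι₂]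

/-- The (unnormalised) maximally entangled state between two codes. -/
noncomputable def Psi (K : ℕ) (d₁ : ι₁ → ℕ) (d₂ : ι₂ → ℕ) (φ : Fin K → H d₁) (χ : Fin K → H d₂)
    (x : Cfg d₁) (y : Cfg d₂) : ℂ := ∑ i, φ i x * χ i y

lemma Psi_expand (K : ℕ) (d₁ : ι₁ → ℕ) (d₂ : ι₂ → ℕ) (φ : Fin K → H d₁) (χ : Fin K → H d₂)
    (T₁ : Finset ι₁) (T₂ : Finset ι₂) (a₁ b₁ : Cfg d₁) (a₂ b₂ : Cfg d₂) :
    ∑ c₁, ∑ c₂, Psi K d₁ d₂ φ χ (T₁.piecewise a₁ c₁) (T₂.piecewise a₂ c₂) *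
      conj (Psi K d₁ d₂ φ χ (T₁.piecewise b₁ c₁) (T₂.piecewise b₂ c₂))
    = ∑ i, ∑ j, RR d₁ T₁ (dyad d₁ (φ i) (φ j)) a₁ b₁ * RR d₂ T₂ (dyad d₂ (χ i) (χ j)) a₂ b₂ := by
  simp only [RR, Finset.sum_mul_sum, Psi, map_sum, dyad, Matrix.of_apply, map_mul]
  simp_rw [Finset.sum_comm (s := (Finset.univ : Finset (Fin K)))
    (t := (Finset.univ : Finset (Cfg d₁)))]
  refine Finset.sum_congr rfl fun c₁ _ => ?_
  simp_rw [Finset.sum_comm (s := (Finset.univ : Finset (Fin K)))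
    (t := (Finset.univ : Finset (Cfg d₂)))]
  refine Finset.sum_congr rfl fun c₂ _ => ?_
  refine Finset.sum_congr rfl fun i _ => Finset.sum_congr rfl fun j _ => ?_
  ring

lemma RR_sum (K : ℕ) (d₁ : ι₁ → ℕ) (φ : Fin K → H d₁)
    (T₁ : Finset ι₁) (a₁ b₁ : Cfg d₁) :
    RR d₁ T₁ (∑ i, dyad d₁ (φ i) (φ i)) a₁ b₁ = ∑ i, RR d₁ T₁ (dyad d₁ (φ i) (φ i)) a₁ b₁ := by
  simp only [RR, Matrix.sum_apply]
  rw [Finset.sum_comm]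

lemma Psi_uniform (K D₁ D₂ r₁ r₂ : ℕ) (d₁ : ι₁ → ℕ) (d₂ : ι₂ → ℕ)
    (hd₁ : d₁ = fun _ => D₁) (hd₂ : d₂ = fun _ => D₂) (hD₁ : 0 < D₁) (hD₂ : 0 < D₂)
    (hr₁ : 2 * r₁ ≤ Fintype.card ι₁) (hr₂ : 2 * r₂ ≤ Fintype.card ι₂)
    (hK₁ : K = D₁ ^ (Fintype.card ι₁ - 2 * r₁)) (hK₂ : K = D₂ ^ (Fintype.card ι₂ - 2 * r₂))
    (W₁ : Submodule ℂ (H d₁)) (hW₁ : IsUniformSubspace d₁ r₁ W₁)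
    (W₂ : Submodule ℂ (H d₂)) (hW₂ : IsUniformSubspace d₂ r₂ W₂)
    (φ : Fin K → H d₁) (hφ : ∀ i, φ i ∈ W₁)
    (hoφ : ∀ i j, dotc d₁ (φ i) (φ j) = if i = j then 1 else 0)
    (χ : Fin K → H d₂) (hχ : ∀ i, χ i ∈ W₂)
    (hoχ : ∀ i j, dotc d₂ (χ i) (χ j) = if i = j then 1 else 0)
    (T₁ : Finset ι₁) (T₂ : Finset ι₂)
    (hT₁ : T₁.card ≤ Fintype.card ι₁ - r₁) (hT₂ : T₂.card ≤ Fintype.card ι₂ - r₂)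
    (hT : T₁.card + T₂.card ≤ r₁ + r₂ + 1)
    (a₁ b₁ : Cfg d₁) (a₂ b₂ : Cfg d₂) :
    ∑ c₁, ∑ c₂, Psi K d₁ d₂ φ χ (T₁.piecewise a₁ c₁) (T₂.piecewise a₂ c₂) *
      conj (Psi K d₁ d₂ φ χ (T₁.piecewise b₁ c₁) (T₂.piecewise b₂ c₂))
    = K * ag d₁ T₁ a₁ b₁ * ag d₂ T₂ a₂ b₂ := by
  rw [Psi_expand]
  have hor : T₁.card ≤ r₁ ∨ T₂.card ≤ r₂ := by omega
  rcases hor with h | h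
  · have := fun i j => RR_sub d₁ r₁ W₁ hW₁ (by omega) T₁ h (φ i) (φ j) (hφ i) (hφ j) a₁ b₁
    simp only [this, hoφ, ite_mul, one_mul, zero_mul, Finset.sum_ite_eq', Finset.mem_univ, if_true]
    rw [← Finset.mul_sum, ← RR_sum, qmds D₂ r₂ K d₂ hd₂ hr₂ hK₂ hD₂ W₂ hW₂ χ hχ hoχ T₂ hT₂]
    ring
  · have := fun i j => RR_sub d₂ r₂ W₂ hW₂ (by omega) T₂ h (χ i) (χ j) (hχ i) (hχ j) a₂ b₂
    simp only [this, hoχ, ite_mul, one_mul, zero_mul, mul_ite, mul_zero, Finset.sum_ite_eq',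
      Finset.mem_univ, if_true]
    rw [← Finset.sum_mul, ← RR_sum, qmds D₁ r₁ K d₁ hd₁ hr₁ hK₁ hD₁ W₁ hW₁ φ hφ hoφ T₁ hT₁]

end two

section join

variable {κ A : Type} [Fintype κ] [DecidableEq κ] [Fintype A] [DecidableEq A]

/-- Joining configurations. -/
def JJ (D : ℕ) (e : κ ⊕ A ≃ ι) : ((κ → Fin D) × (A → Fin D)) ≃ (ι → Fin D) :=
  (Equiv.sumArrowEquivProdArrow κ A (Fin D)).symm.trans (Equiv.arrowCongr e (Equiv.refl _))

lemma JJ_inl (D : ℕ) (e : κ ⊕ A ≃ ι) (p) (i : κ) : JJ D e p (e (Sum.inl i)) = p.1 i := by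
  simp [JJ, Equiv.sumArrowEquivProdArrow]

lemma JJ_inr (D : ℕ) (e : κ ⊕ A ≃ ι) (p) (i : A) : JJ D e p (e (Sum.inr i)) = p.2 i := by
  simp [JJ, Equiv.sumArrowEquivProdArrow]

/-- Extending the set. -/
def TT (e : κ ⊕ A ≃ ι) (S : Finset κ) : Finset ι := (S.disjSum Finset.univ).map e.toEmbedding

lemma mem_TT (e : κ ⊕ A ≃ ι) (S : Finset κ) (j : κ ⊕ A) :
    e j ∈ TT e S ↔ j ∈ S.disjSum Finset.univ := by
  simp [TT]

lemma card_TT (e : κ ⊕ A ≃ ι) (S : Finset κ) : (TT e S).card = S.card + Fintype.card A := by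
  simp [TT, Finset.card_disjSum]

lemma JJ_pw (D : ℕ) (e : κ ⊕ A ≃ ι) (S : Finset κ) (a c : κ → Fin D) (z t : A → Fin D) :
    (TT e S).piecewise (JJ D e (a, z)) (JJ D e (c, t)) = JJ D e (S.piecewise a c, z) := by
  funext i
  obtain ⟨j, rfl⟩ := e.surjective i
  rcases j with k | k
  · by_cases h : k ∈ S <;> simp [Finset.piecewise, mem_TT, JJ_inl, h]
  · simp [Finset.piecewise, mem_TT, JJ_inr]

lemma JJ_ag (D : ℕ) (e : κ ⊕ A ≃ ι) (S : Finset κ) (a b : κ → Fin D) (z t : A → Fin D) :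
    ag (fun _ => D) (TT e S) (JJ D e (a, z)) (JJ D e (b, t)) =
      ag (fun _ => D) S a b * if z = t then 1 else 0 := by
  unfold ag
  rw [ite_zero_mul_ite_zero, mul_one]
  congr 1
  apply propext
  constructor
  · intro h
    constructor
    · intro k hk
      simpa [JJ_inl] using h (e (Sum.inl k)) (by simp [mem_TT, hk])
    · funext k
      simpa [JJ_inr] using h (e (Sum.inr k)) (by simp [mem_TT])
  · rintro ⟨h, rfl⟩ i hi
    obtain ⟨j, rfl⟩ := e.surjective i
    rcases j with k | k
    · rw [JJ_inl, JJ_inl]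
      exact h k (by simpa [mem_TT] using hi)
    · rw [JJ_inr, JJ_inr]

end join

section final

variable {ι₁ ι₂ κ₁ κ₂ A₁ A₂ : Type} [Fintype ι₁] [DecidableEq ι₁] [Fintype ι₂] [DecidableEq ι₂]
  [Fintype κ₁] [DecidableEq κ₁] [Fintype κ₂] [DecidableEq κ₂]
  [Fintype A₁] [DecidableEq A₁] [Fintype A₂] [DecidableEq A₂]

/-- Dimensions of the remaining system. -/
abbrev dd (κ₁ κ₂ : Type) (D₁ D₂ : ℕ) : κ₁ ⊕ κ₂ → ℕ :=
  Sum.elim (fun _ : κ₁ => D₁) (fun _ : κ₂ => D₂)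

/-- left part -/
def lft (D₁ D₂ : ℕ) (x : Cfg (dd κ₁ κ₂ D₁ D₂)) : κ₁ → Fin D₁ := fun i => x (Sum.inl i)

/-- right part -/
def rgt (D₁ D₂ : ℕ) (x : Cfg (dd κ₁ κ₂ D₁ D₂)) : κ₂ → Fin D₂ := fun i => x (Sum.inr i)

/-- splitting -/
def splitE (D₁ D₂ : ℕ) : Cfg (dd κ₁ κ₂ D₁ D₂) ≃ (κ₁ → Fin D₁) × (κ₂ → Fin D₂) where
  toFun x := (lft D₁ D₂ x, rgt D₁ D₂ x)
  invFun p := fun i => match i with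
    | Sum.inl i => p.1 i
    | Sum.inr i => p.2 i
  left_inv := by
    intro x
    funext i
    rcases i with i | i <;> rfl
  right_inv := by
    intro p
    rfl

lemma lft_pw (D₁ D₂ : ℕ) (S : Finset (κ₁ ⊕ κ₂)) (a c : Cfg (dd κ₁ κ₂ D₁ D₂)) :
    lft D₁ D₂ (S.piecewise a c) = S.toLeft.piecewise (lft D₁ D₂ a) (lft D₁ D₂ c) := by
  funext i
  by_cases h : Sum.inl i ∈ S <;> simp [lft, Finset.piecewise, h] <;> rfl

lemma rgt_pw (D₁ D₂ : ℕ) (S : Finset (κ₁ ⊕ κ₂)) (a c : Cfg (dd κ₁ κ₂ D₁ D₂)) :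
    rgt D₁ D₂ (S.piecewise a c) = S.toRight.piecewise (rgt D₁ D₂ a) (rgt D₁ D₂ c) := by
  funext i
  by_cases h : Sum.inr i ∈ S <;> simp [rgt, Finset.piecewise, h] <;> rfl

lemma ag_split (D₁ D₂ : ℕ) (S : Finset (κ₁ ⊕ κ₂)) (a b : Cfg (dd κ₁ κ₂ D₁ D₂)) :
    ag (dd κ₁ κ₂ D₁ D₂) S a b = ag (fun _ => D₁) S.toLeft (lft D₁ D₂ a) (lft D₁ D₂ b) *
      ag (fun _ => D₂) S.toRight (rgt D₁ D₂ a) (rgt D₁ D₂ b) := by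
  unfold ag
  rw [ite_zero_mul_ite_zero, mul_one]
  congr 1
  apply propext
  constructor
  · intro h
    exact ⟨fun i hi => h (Sum.inl i) (by simpa using hi), fun i hi => h (Sum.inr i) (by simpa using hi)⟩
  · rintro ⟨h, h'⟩ i hi
    rcases i with i | i
    · exact h i (by simpa using hi)
    · exact h' i (by simpa using hi)

/-- The linear map `v ↦ ⟨v|Ψ⟩`. -/
noncomputable def LL (D₁ D₂ : ℕ) (e₁ : κ₁ ⊕ A₁ ≃ ι₁) (e₂ : κ₂ ⊕ A₂ ≃ ι₂)
    (G : (ι₁ → Fin D₁) → (ι₂ → Fin D₂) → ℂ) :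
    ((A₁ → Fin D₁) × (A₂ → Fin D₂) → ℂ) →ₗ[ℂ] H (dd κ₁ κ₂ D₁ D₂) where
  toFun v x := ∑ z, v z * G (JJ D₁ e₁ (lft D₁ D₂ x, z.1)) (JJ D₂ e₂ (rgt D₁ D₂ x, z.2))
  map_add' v w := by
    funext x
    simp [add_mul, Finset.sum_add_distrib]
  map_smul' c v := by
    funext x
    simp [mul_assoc, Finset.mul_sum]

lemma LL_aux (D₁ D₂ : ℕ) (e₁ : κ₁ ⊕ A₁ ≃ ι₁) (e₂ : κ₂ ⊕ A₂ ≃ ι₂)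
    (G : (ι₁ → Fin D₁) → (ι₂ → Fin D₂) → ℂ) (S : Finset (κ₁ ⊕ κ₂)) (k : ℂ)
    (hG : ∀ a₁ b₁ a₂ b₂, ∑ c₁, ∑ c₂,
      G ((TT e₁ S.toLeft).piecewise a₁ c₁) ((TT e₂ S.toRight).piecewise a₂ c₂) *
      conj (G ((TT e₁ S.toLeft).piecewise b₁ c₁) ((TT e₂ S.toRight).piecewise b₂ c₂))
      = k * ag (fun _ => D₁) (TT e₁ S.toLeft) a₁ b₁ * ag (fun _ => D₂) (TT e₂ S.toRight) a₂ b₂)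
    (z w : (A₁ → Fin D₁) × (A₂ → Fin D₂)) (a b : Cfg (dd κ₁ κ₂ D₁ D₂)) :
    ((D₁ : ℂ) ^ Fintype.card A₁ * (D₂ : ℂ) ^ Fintype.card A₂) *
      ∑ c, G (JJ D₁ e₁ (lft D₁ D₂ (S.piecewise a c), z.1)) (JJ D₂ e₂ (rgt D₁ D₂ (S.piecewise a c), z.2))
      * conj (G (JJ D₁ e₁ (lft D₁ D₂ (S.piecewise b c), w.1))
          (JJ D₂ e₂ (rgt D₁ D₂ (S.piecewise b c), w.2)))
    = k * ag (dd κ₁ κ₂ D₁ D₂) S a b * if z = w then 1 else 0 := by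
  have h := hG (JJ D₁ e₁ (lft D₁ D₂ a, z.1)) (JJ D₁ e₁ (lft D₁ D₂ b, w.1))
    (JJ D₂ e₂ (rgt D₁ D₂ a, z.2)) (JJ D₂ e₂ (rgt D₁ D₂ b, w.2))
  rw [JJ_ag, JJ_ag] at h
  have hr : k * ag (dd κ₁ κ₂ D₁ D₂) S a b * (if z = w then 1 else 0) =
      k * (ag (fun _ => D₁) S.toLeft (lft D₁ D₂ a) (lft D₁ D₂ b) * if z.1 = w.1 then 1 else 0) *
       (ag (fun _ => D₂) S.toRight (rgt D₁ D₂ a) (rgt D₁ D₂ b) * if z.2 = w.2 then 1 else 0) := by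
    rw [ag_split]
    have : (if z = w then (1 : ℂ) else 0) = (if z.1 = w.1 then 1 else 0) * (if z.2 = w.2 then 1 else 0) := by
      rw [ite_zero_mul_ite_zero, mul_one]
      simp only [Prod.ext_iff]
    rw [this]
    ring
  rw [hr, ← h]
  rw [← (JJ D₁ e₁).sum_comp]
  simp_rw [← (JJ D₂ e₂).sum_comp]
  simp only [Fintype.sum_prod_type]
  simp only [JJ_pw, Finset.sum_const, Finset.card_univ, Fintype.card_pi, Fintype.card_fin,
    Finset.prod_const, nsmul_eq_mul, lft_pw, rgt_pw, ← Finset.mul_sum]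
  rw [← mul_assoc]
  push_cast
  congr 1
  rw [← Fintype.sum_prod_type', ← (splitE D₁ D₂).sum_comp]
  rfl

lemma LL_RR (D₁ D₂ : ℕ) (e₁ : κ₁ ⊕ A₁ ≃ ι₁) (e₂ : κ₂ ⊕ A₂ ≃ ι₂)
    (G : (ι₁ → Fin D₁) → (ι₂ → Fin D₂) → ℂ) (S : Finset (κ₁ ⊕ κ₂)) (k : ℂ)
    (hG : ∀ a₁ b₁ a₂ b₂, ∑ c₁, ∑ c₂,
      G ((TT e₁ S.toLeft).piecewise a₁ c₁) ((TT e₂ S.toRight).piecewise a₂ c₂) *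
      conj (G ((TT e₁ S.toLeft).piecewise b₁ c₁) ((TT e₂ S.toRight).piecewise b₂ c₂))
      = k * ag (fun _ => D₁) (TT e₁ S.toLeft) a₁ b₁ * ag (fun _ => D₂) (TT e₂ S.toRight) a₂ b₂)
    (v : (A₁ → Fin D₁) × (A₂ → Fin D₂) → ℂ) (a b : Cfg (dd κ₁ κ₂ D₁ D₂)) :
    ((D₁ : ℂ) ^ Fintype.card A₁ * (D₂ : ℂ) ^ Fintype.card A₂) *
      RR (dd κ₁ κ₂ D₁ D₂) S (dyad _ (LL D₁ D₂ e₁ e₂ G v) (LL D₁ D₂ e₁ e₂ G v)) a b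
    = k * (∑ z, v z * conj (v z)) * ag (dd κ₁ κ₂ D₁ D₂) S a b := by
  have h := LL_aux D₁ D₂ e₁ e₂ G S k hG
  have h2 : RR (dd κ₁ κ₂ D₁ D₂) S (dyad _ (LL D₁ D₂ e₁ e₂ G v) (LL D₁ D₂ e₁ e₂ G v)) a b =
      ∑ z, ∑ w, (v z * conj (v w)) * 
      ∑ c, G (JJ D₁ e₁ (lft D₁ D₂ (S.piecewise a c), z.1)) (JJ D₂ e₂ (rgt D₁ D₂ (S.piecewise a c), z.2))
      * conj (G (JJ D₁ e₁ (lft D₁ D₂ (S.piecewise b c), w.1))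
          (JJ D₂ e₂ (rgt D₁ D₂ (S.piecewise b c), w.2))) := by
    simp only [RR, dyad, Matrix.of_apply, LL, LinearMap.coe_mk, AddHom.coe_mk, map_sum, map_mul,
      Finset.sum_mul_sum]
    rw [Finset.sum_comm]
    refine Finset.sum_congr rfl fun z _ => ?_
    rw [Finset.sum_comm]
    refine Finset.sum_congr rfl fun w _ => ?_
    rw [Finset.mul_sum]
    refine Finset.sum_congr rfl fun c _ => ?_
    ring
  rw [h2, Finset.mul_sum, Finset.mul_sum, Finset.sum_mul]
  refine Finset.sum_congr rfl fun z _ => ?_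
  rw [Finset.mul_sum]
  have h3 : ∀ w, ((D₁ : ℂ) ^ Fintype.card A₁ * (D₂ : ℂ) ^ Fintype.card A₂) * ((v z * conj (v w)) * 
      ∑ c, G (JJ D₁ e₁ (lft D₁ D₂ (S.piecewise a c), z.1)) (JJ D₂ e₂ (rgt D₁ D₂ (S.piecewise a c), z.2))
      * conj (G (JJ D₁ e₁ (lft D₁ D₂ (S.piecewise b c), w.1))
          (JJ D₂ e₂ (rgt D₁ D₂ (S.piecewise b c), w.2)))) =
      if z = w then k * (v z * conj (v w)) * ag (dd κ₁ κ₂ D₁ D₂) S a b else 0 := by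
    intro w
    rw [mul_left_comm, h z w a b]
    split_ifs <;> ring
  rw [Finset.sum_congr rfl fun w _ => h3 w]
  simp

lemma RR_empty (d : ι → ℕ) (ψ : H d) (a b : Cfg d) :
    RR d ∅ (dyad d ψ ψ) a b = dotc d ψ ψ := by
  simp [RR, dyad, dotc, mul_comm]

end final

end RUnif

open RUnif in
/-- Given two QMDS codes `((n₁, K, d₁))_{D₁}`, `((n₂, K, d₂))_{D₂}`
with common `K > 1` and `rᵢ = dᵢ - 1`, for all `0 ≤ α ≤ r₁`, `0 ≤ β ≤ r₂` there is an
`l`-uniform subspace `W` of `(ℂ^{D₁})^{⊗(n₁-α)} ⊗ (ℂ^{D₂})^{⊗(n₂-β)}` with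
`dim W = D₁^α D₂^β` and `l = min(n₁-r₁-α, n₂-r₂-β, r₁+r₂+1-α-β)`. -/
theorem statement9 (n1 n2 D1 D2 r1 r2 K : ℕ)
    (hQ1 : K = D1 ^ (n1 - 2 * r1)) (h1 : 2 * r1 ≤ n1)
    (hQ2 : K = D2 ^ (n2 - 2 * r2)) (h2 : 2 * r2 ≤ n2)
    (hK : 1 < K)
    (W1 : Submodule ℂ (H (fun _ : Fin n1 => D1)))
    (hW1 : IsUniformSubspace (fun _ : Fin n1 => D1) r1 W1)
    (hdim1 : Module.finrank ℂ W1 = K)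
    (W2 : Submodule ℂ (H (fun _ : Fin n2 => D2)))
    (hW2 : IsUniformSubspace (fun _ : Fin n2 => D2) r2 W2)
    (hdim2 : Module.finrank ℂ W2 = K) :
    ∀ α β : ℕ, α ≤ r1 → β ≤ r2 →
      ∃ W : Submodule ℂ
          (H (Sum.elim (fun _ : Fin (n1 - α) => D1) (fun _ : Fin (n2 - β) => D2))),
        IsUniformSubspace (Sum.elim (fun _ : Fin (n1 - α) => D1) (fun _ : Fin (n2 - β) => D2))
          (min (n1 - r1 - α) (min (n2 - r2 - β) (r1 + r2 + 1 - α - β))) W ∧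
        Module.finrank ℂ W = D1 ^ α * D2 ^ β := by
  intro α β hα hβ
  have hD1 : 0 < D1 := by
    rcases Nat.eq_zero_or_pos D1 with h | h
    · subst h
      rcases Nat.eq_zero_or_pos (n1 - 2 * r1) with h0 | h0
      · rw [h0] at hQ1; simp at hQ1; omega
      · rw [zero_pow h0.ne'] at hQ1; omega
    · exact h
  have hD2 : 0 < D2 := by
    rcases Nat.eq_zero_or_pos D2 with h | h
    · subst h
      rcases Nat.eq_zero_or_pos (n2 - 2 * r2) with h0 | h0
      · rw [h0] at hQ2; simp at hQ2; omega
      · rw [zero_pow h0.ne'] at hQ2; omega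
    · exact h
  obtain ⟨φ, hφ, hoφ⟩ := exists_onb _ W1 K hdim1
  obtain ⟨χ, hχ, hoχ⟩ := exists_onb _ W2 K hdim2
  let e1 : Fin (n1 - α) ⊕ Fin α ≃ Fin n1 := finSumFinEquiv.trans (finCongr (by omega))
  let e2 : Fin (n2 - β) ⊕ Fin β ≃ Fin n2 := finSumFinEquiv.trans (finCongr (by omega))
  let G := Psi K (fun _ : Fin n1 => D1) (fun _ : Fin n2 => D2) φ χ
  let L := LL D1 D2 e1 e2 G
  let N : ℂ := (D1 : ℂ) ^ α * (D2 : ℂ) ^ β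
  have hN : N ≠ 0 := mul_ne_zero (pow_ne_zero _ (by exact_mod_cast hD1.ne'))
    (pow_ne_zero _ (by exact_mod_cast hD2.ne'))
  have hKc : (K : ℂ) ≠ 0 := by
    have : K ≠ 0 := by omega
    exact_mod_cast this
  have main : ∀ S : Finset (Fin (n1 - α) ⊕ Fin (n2 - β)),
      S.card ≤ (min (n1 - r1 - α) (min (n2 - r2 - β) (r1 + r2 + 1 - α - β))) →
      ∀ v a b, N * RR (dd (Fin (n1 - α)) (Fin (n2 - β)) D1 D2) S (dyad _ (L v) (L v)) a b
        = K * (∑ z, v z * conj (v z)) * ag _ S a b := by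
    intro S hS v a b
    have hcard := Finset.card_toLeft_add_card_toRight (u := S)
    have := LL_RR D1 D2 e1 e2 G S K (by
      intro a₁ b₁ a₂ b₂
      apply Psi_uniform K D1 D2 r1 r2 (fun _ : Fin n1 => D1) (fun _ : Fin n2 => D2) rfl rfl hD1 hD2
        (by simpa using h1) (by simpa using h2) (by simpa using hQ1) (by simpa using hQ2)
        W1 hW1 W2 hW2 φ hφ hoφ χ hχ hoχ
      · rw [card_TT, Fintype.card_fin, Fintype.card_fin]; omega
      · rw [card_TT, Fintype.card_fin, Fintype.card_fin]; omega
      · rw [card_TT, card_TT, Fintype.card_fin, Fintype.card_fin]; omega) v a b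
    simpa only [Fintype.card_fin] using this
  let x0 : Cfg (dd (Fin (n1 - α)) (Fin (n2 - β)) D1 D2) :=
    (splitE D1 D2).symm (fun _ => ⟨0, hD1⟩, fun _ => ⟨0, hD2⟩)
  have hnorm : ∀ v, N * dotc _ (L v) (L v) = K * (∑ z, v z * conj (v z)) := by
    intro v
    have := main ∅ (by simp) v x0 x0
    rw [RR_empty] at this
    rw [this]
    simp [ag]
  refine ⟨LinearMap.range L, ?_, ?_⟩
  · rintro ψ ⟨v, rfl⟩ hu S hS
    have hv := hnorm v
    rw [show dotc _ (L v) (L v) = 1 from hu, mul_one] at hv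
    ext u w
    let ext0 : SubCfg (dd (Fin (n1 - α)) (Fin (n2 - β)) D1 D2) S →
      Cfg (dd (Fin (n1 - α)) (Fin (n2 - β)) D1 D2) := fun u => merge _ S u (fun i => x0 i.1)
    have hext : ∀ u, (fun i : S => ext0 u i.1) = u := by
      intro u
      funext i
      simp [ext0, merge]
    have := main S hS.le v (ext0 u) (ext0 w)
    rw [← hv] at this
    have := mul_left_cancel₀ hN this
    rw [RR_eq_ptr, ag_eq, hext, hext] at this
    have hp := prod_ne _ S x0
    rw [unifMix, Matrix.smul_apply, ← this, smul_eq_mul, inv_mul_cancel_left₀ hp]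
  · have hinj : Function.Injective L := by
      rw [← LinearMap.ker_eq_bot, LinearMap.ker_eq_bot']
      intro v hv
      have h := hnorm v
      rw [hv] at h
      simp only [dotc, Pi.zero_apply, mul_zero, Finset.sum_const_zero] at h
      have h0 : ∑ z, v z * conj (v z) = 0 := by
        rcases mul_eq_zero.mp h.symm with h | h
        · exact absurd h hKc
        · exact h
      simp only [Complex.mul_conj] at h0
      have h0' : ∑ z, Complex.normSq (v z) = 0 := by exact_mod_cast h0
      funext z
      have := (Finset.sum_eq_zero_iff_of_nonneg (fun _ _ => Complex.normSq_nonneg _)).mp h0' z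
        (Finset.mem_univ _)
      exact Complex.normSq_eq_zero.mp this
    rw [LinearMap.finrank_range_of_inj hinj]
    simp
end

section
/- There exists a 3-uniform unit vector in the 9-partite space (C^2)^{⊗4} ⊗ (C^4)^{⊗5}, i.e., a unit vector whose reductions to any 3 of the 9 parties (four of local dimension 2 and five of local dimension 4) are maximally mixed. Moreover, there exists an 8-dimensional 2-uniform subspace of the 7-partite space (C^2)^{⊗3} ⊗ (C^4)^{⊗4}. -/
/-!
Common definitions: multipartite systems with parties indexed by a finite type `ι`,
local dimensions `d : ι → ℕ`, vectors as functions on the configuration space,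
partial traces, and `r`-uniform states and subspaces.
-/

open scoped ComplexConjugate Matrix

namespace RUnif

/-- Bits to `ZMod 2`. -/
def tz (b : Bool) : ZMod 2 := if b then 1 else 0

theorem tz_xor (a b : Bool) : tz (a ^^ b) = tz a + tz b := by
  revert a b; decide

theorem tz_inj {a b : Bool} (h : tz a = tz b) : a = b := by
  revert a b; decide

/-- The sign character of `ZMod 2`. -/
noncomputable def sgn (a : ZMod 2) : ℂ := if a = 0 then 1 else -1

theorem zcases (a : ZMod 2) : a = 0 ∨ a = 1 := by revert a; decide

theorem z11 : (1 : ZMod 2) + 1 = 0 := by decide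

theorem sgn_mul (a b : ZMod 2) : sgn a * sgn b = sgn (a + b) := by
  rcases zcases a with rfl | rfl <;> rcases zcases b with rfl | rfl <;> simp [sgn, z11]

theorem sgn_add_one (a : ZMod 2) : sgn (a + 1) = - sgn a := by
  rcases zcases a with rfl | rfl <;> simp [sgn, z11]

theorem sgn_zero : sgn 0 = 1 := by simp [sgn]

theorem conj_sgn (a : ZMod 2) : conj (sgn a) = sgn a := by
  rcases zcases a with rfl | rfl <;> simp [sgn]

/-- The entry of the adjacency matrix given by columns stored as bit strings. -/
def adj {N : ℕ} (col : Fin N → ℕ) (p q : Fin N) : ZMod 2 := tz ((col q).testBit p)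

/-- Upper triangular part over `ZMod 2`. -/
def uppz {N : ℕ} (col : Fin N → ℕ) : Matrix (Fin N) (Fin N) (ZMod 2) :=
  Matrix.of fun p q => if p < q then adj col p q else 0

/-- Quadratic form of the graph. -/
def qf {N : ℕ} (col : Fin N → ℕ) (u : Fin N → ZMod 2) : ZMod 2 :=
  u ⬝ᵥ (uppz col *ᵥ u)

/-- Symmetric and zero diagonal. -/
def GoodCol {N : ℕ} (col : Fin N → ℕ) : Prop :=
  (∀ p q : Fin N, (col q).testBit p = (col p).testBit q) ∧ ∀ p : Fin N, (col p).testBit p = false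

theorem qf_flip {N : ℕ} {col : Fin N → ℕ} (h : GoodCol col) (u : Fin N → ZMod 2) (p : Fin N) :
    qf col (u + Pi.single p 1) = qf col u + ∑ q, adj col p q * u q := by
  have h1 : ∀ q, uppz col p q + uppz col q p = adj col p q := by
    intro q
    simp only [uppz, Matrix.of_apply]
    rcases lt_trichotomy p q with hl | rfl | hl
    · simp [hl, not_lt.mpr hl.le]
    · simp [adj, h.2, tz]
    · simp [hl, not_lt.mpr hl.le, adj, h.1 p q]
  have h2 : uppz col p p = 0 := by simp [uppz]
  simp only [qf, Matrix.mulVec_add, add_dotProduct, dotProduct_add, single_dotProduct,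
    Matrix.mulVec_single, one_mul]
  have h3 : ∑ q, adj col p q * u q = (uppz col *ᵥ u) p + u ⬝ᵥ (fun q => uppz col q p) := by
    simp only [Matrix.mulVec, dotProduct, ← Finset.sum_add_distrib]
    refine Finset.sum_congr rfl fun q _ => ?_
    rw [← h1]; ring
  rw [h3]
  simp only [MulOpposite.op_one, one_smul]
  have h4 : (uppz col).col p p = 0 := h2
  have h5 : (uppz col).col p = fun q => uppz col q p := rfl
  rw [h4, h5]
  ring

/-- Exhaustive check that no nonzero vector supported in `inS` has its neighbourhood
sum supported in `inS`. -/
def chk {N : ℕ} (col : Fin N → ℕ) (inS : Fin N → Bool) : List (Fin N) → ℕ → Bool → Bool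
  | [], acc, nz => !nz || (List.finRange N).any (fun p => !(inS p) && acc.testBit p)
  | q :: qs, acc, nz => chk col inS qs acc nz && (!(inS q) || chk col inS qs (acc ^^^ col q) true)

theorem chk_sound {N : ℕ} (col : Fin N → ℕ) (inS : Fin N → Bool) (u : Fin N → ZMod 2)
    (hu : ∀ q, inS q = false → u q = 0) (L : List (Fin N)) :
    ∀ (acc : ℕ) (nz : Bool), chk col inS L acc nz = true → (nz = true ∨ ∃ q ∈ L, u q ≠ 0) →
      ∃ p : Fin N, inS p = false ∧
        tz (acc.testBit p) + (L.map fun q => adj col p q * u q).sum = 1 := by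
  induction L with
  | nil =>
    intro acc nz h hn
    simp at hn
    subst hn
    simp [chk] at h
    obtain ⟨p, h1, h2⟩ := h
    exact ⟨p, h1, by simp [h2, tz]⟩
  | cons q qs ih =>
    intro acc nz h hn
    simp only [chk, Bool.and_eq_true, Bool.or_eq_true, Bool.not_eq_true'] at h
    rcases zcases (u q) with h0 | h1
    · obtain ⟨p, hp, hs⟩ := ih acc nz h.1 (by
        rcases hn with hn | ⟨q', hq', hne⟩
        · exact Or.inl hn
        · rcases List.mem_cons.mp hq' with rfl | hm
          · exact absurd h0 hne
          · exact Or.inr ⟨q', hm, hne⟩)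
      exact ⟨p, hp, by simpa [h0] using hs⟩
    · have hin : inS q = true := by
        by_contra hc
        have := hu q (by simpa using hc)
        rw [this] at h1
        exact absurd h1 (by decide)
      obtain ⟨p, hp, hs⟩ := ih (acc ^^^ col q) true (by simpa [hin] using h.2) (Or.inl rfl)
      refine ⟨p, hp, ?_⟩
      rw [Nat.testBit_xor, tz_xor] at hs
      rw [List.map_cons, List.sum_cons, h1, mul_one, ← add_assoc]
      exact hs

variable {ι : Type} [Fintype ι] [DecidableEq ι]

/-- Is the qubit in the ancilla or in a party of `S`? -/
def inSet {N : ℕ} (blk : Fin N → Option ι) (S : Finset ι) (q : Fin N) : Bool :=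
  match blk q with
  | none => true
  | some i => decide (i ∈ S)

/-- The bits of an ancilla value and a configuration. -/
def bits {N : ℕ} (blk : Fin N → Option ι) (sh : Fin N → ℕ) (d : ι → ℕ) {κ : ℕ}
    (l : Fin κ) (x : Cfg d) (q : Fin N) : ZMod 2 :=
  match blk q with
  | none => tz (l.val.testBit (sh q))
  | some i => tz ((x i).val.testBit (sh q))

/-- Flip of a bit. -/
def fl {N : ℕ} (blk : Fin N → Option ι) (sh : Fin N → ℕ) (d : ι → ℕ) (p : Fin N) (i : ι)
    (z : Fin (d i)) : Fin (d i) :=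
  if blk p = some i then ⟨(z.val ^^^ 2 ^ sh p) % d i, Nat.mod_lt _ z.pos⟩ else z

/-- All finitely checkable conditions. -/
structure Good {N : ℕ} (blk : Fin N → Option ι) (sh : Fin N → ℕ) (d : ι → ℕ) (κ r : ℕ)
    (col : Fin N → ℕ) : Prop where
  hcol : GoodCol col
  inv : ∀ p i z, fl blk sh d p i (fl blk sh d p i z) = z
  flip : ∀ p i, blk p = some i → ∀ q, blk q = some i → ∀ z : Fin (d i),
    (fl blk sh d p i z).val.testBit (sh q) = (z.val.testBit (sh q) ^^ decide (q = p))
  injd : ∀ i, ∀ z w : Fin (d i), (∀ q, blk q = some i →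
    z.val.testBit (sh q) = w.val.testBit (sh q)) → z = w
  injk : ∀ l m : Fin κ, (∀ q, blk q = none →
    l.val.testBit (sh q) = m.val.testBit (sh q)) → l = m
  hchk : ∀ S ∈ Finset.powersetCard r (Finset.univ : Finset ι),
    chk col (inSet blk S) (List.finRange N) 0 false = true

/-- The basis vectors. -/
noncomputable def chi {N : ℕ} (blk : Fin N → Option ι) (sh : Fin N → ℕ) (d : ι → ℕ) {κ : ℕ}
    (col : Fin N → ℕ) (l : Fin κ) (x : Cfg d) : ℂ := sgn (qf col (bits blk sh d l x))

section
variable {N : ℕ} {blk : Fin N → Option ι} {sh : Fin N → ℕ} {d : ι → ℕ} {κ r : ℕ}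
    {col : Fin N → ℕ}

theorem bits_flip (h : Good blk sh d κ r col) (p : Fin N) (i : ι) (hp : blk p = some i)
    (l : Fin κ) (x : Cfg d) :
    bits blk sh d l (fun j => fl blk sh d p j (x j)) = bits blk sh d l x + Pi.single p 1 := by
  funext q
  simp only [bits, Pi.add_apply]
  by_cases hqp : q = p
  · subst hqp
    simp only [hp]
    rw [h.flip q i hp q hp, tz_xor]
    simp [tz]
  · rw [Pi.single_eq_of_ne hqp, add_zero]
    cases hq : blk q with
    | none => rfl
    | some j =>
      simp only
      by_cases hj : blk p = some j
      · rw [h.flip p j hj q hq]; simp [hqp]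
      · simp [fl, hj]

theorem chi_self (l : Fin κ) (x : Cfg d) :
    chi blk sh d col l x * conj (chi blk sh d col l x) = 1 := by
  unfold chi
  rw [conj_sgn, sgn_mul, CharTwo.add_self_eq_zero, sgn_zero]

theorem chi_orth (h : Good blk sh d κ r col) (S : Finset ι) (hS : S.card = r)
    (l m : Fin κ) (a b : SubCfg d S) (hne : ¬ (l = m ∧ a = b)) :
    ∑ c : CoCfg d S, chi blk sh d col l (merge d S a c) *
      conj (chi blk sh d col m (merge d S b c)) = 0 := by
  by_cases hC : IsEmpty (CoCfg d S)
  · simp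
  rw [not_isEmpty_iff] at hC
  obtain ⟨c₀⟩ := hC
  set D : CoCfg d S → Fin N → ZMod 2 := fun c =>
    bits blk sh d l (merge d S a c) + bits blk sh d m (merge d S b c) with hD
  have hDc : ∀ c, D c = D c₀ := by
    intro c
    funext q
    simp only [hD, Pi.add_apply, bits]
    cases hq : blk q with
    | none => rfl
    | some j =>
      simp only [merge]
      by_cases hj : j ∈ S
      · simp [hj]
      · simp [hj, CharTwo.add_self_eq_zero]
  have hsupp : ∀ q, inSet blk S q = false → D c₀ q = 0 := by
    intro q hq
    simp only [hD, Pi.add_apply, bits]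
    unfold inSet at hq
    cases hb : blk q with
    | none => simp [hb] at hq
    | some j =>
      simp only [hb, decide_eq_false_iff_not] at hq
      simp [merge, hq, CharTwo.add_self_eq_zero]
  have hnz : ∃ q, D c₀ q ≠ 0 := by
    by_contra hcon
    push Not at hcon
    have hcon' : ∀ q, bits blk sh d l (merge d S a c₀) q = bits blk sh d m (merge d S b c₀) q :=
      fun q => CharTwo.add_eq_zero.mp (hcon q)
    apply hne
    constructor
    · refine h.injk l m fun q hq => ?_
      have := hcon' q
      simp only [bits, hq] at this
      exact tz_inj this
    · funext i
      refine h.injd i.1 _ _ fun q hq => ?_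
      have := hcon' q
      simp only [bits, hq, merge, i.2, dif_pos] at this
      exact tz_inj this
  obtain ⟨q₁, hq₁⟩ := hnz
  obtain ⟨p, hp, hsum⟩ := chk_sound col (inSet blk S) (D c₀) hsupp (List.finRange N) 0 false
    (h.hchk S (Finset.mem_powersetCard.mpr ⟨Finset.subset_univ _, hS⟩))
    (Or.inr ⟨q₁, List.mem_finRange q₁, hq₁⟩)
  rw [← Fin.sum_univ_def, Nat.zero_testBit] at hsum
  have hsum' : ∑ q, adj col p q * D c₀ q = 1 := by simpa [tz] using hsum
  obtain ⟨i, hi, hiS⟩ : ∃ i, blk p = some i ∧ i ∉ S := by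
    unfold inSet at hp
    cases hb : blk p with
    | none => simp [hb] at hp
    | some j => exact ⟨j, rfl, by simpa [hb] using hp⟩
  let σ : CoCfg d S → CoCfg d S := fun c j => fl blk sh d p j.1 (c j)
  have hσ : Function.Involutive σ := fun c => by
    funext j; exact h.inv p j.1 (c j)
  have hmerge : ∀ (a : SubCfg d S) (c), merge d S a (σ c) =
      fun j => fl blk sh d p j (merge d S a c j) := by
    intro a c
    funext j
    by_cases hj : j ∈ S
    · have : blk p ≠ some j := by
        rw [hi]; rintro ⟨⟩; exact hiS hj
      simp [merge, hj, fl, this]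
    · simp [merge, hj, σ]
  set F : CoCfg d S → ℂ := fun c => chi blk sh d col l (merge d S a c) *
      conj (chi blk sh d col m (merge d S b c)) with hF
  have hneg : ∀ c, F (σ c) = - F c := by
    intro c
    simp only [hF, chi, conj_sgn, sgn_mul, hmerge, bits_flip h p i hi, qf_flip h.hcol]
    rw [← sgn_add_one]
    congr 1
    rw [← hsum', ← hDc c]
    simp only [hD, Pi.add_apply, mul_add, Finset.sum_add_distrib]
    ring
  have h1 : ∑ c, F c = ∑ c, F (σ c) := (Equiv.sum_comp hσ.toPerm F).symm
  simp only [hneg, Finset.sum_neg_distrib] at h1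
  exact CharZero.eq_neg_self_iff.mp h1

/-- The encoding map. -/
noncomputable def enc (blk : Fin N → Option ι) (sh : Fin N → ℕ) (d : ι → ℕ) (κ : ℕ)
    (col : Fin N → ℕ) : (Fin κ → ℂ) →ₗ[ℂ] H d :=
  ∑ l, (LinearMap.proj l).smulRight (chi blk sh d col l : H d)

theorem enc_apply (α : Fin κ → ℂ) (x : Cfg d) :
    enc blk sh d κ col α x = ∑ l, α l * chi blk sh d col l x := by
  simp [enc]

theorem ptr_enc (h : Good blk sh d κ r col) (S : Finset ι) (hS : S.card = r) (α : Fin κ → ℂ) :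
    ptr d S (dyad d (enc blk sh d κ col α) (enc blk sh d κ col α)) =
      ((∑ l, α l * conj (α l)) * (Fintype.card (CoCfg d S) : ℂ)) • 1 := by
  ext a b
  simp only [ptr, dyad, Matrix.of_apply, enc_apply, map_sum, map_mul, Finset.sum_mul_sum]
  have h1 : ∀ l m, ∑ c : CoCfg d S, (α l * chi blk sh d col l (merge d S a c)) *
      (conj (α m) * conj (chi blk sh d col m (merge d S b c))) =
      if l = m then (if a = b then α l * conj (α l) * (Fintype.card (CoCfg d S) : ℂ) else 0)
      else 0 := by
    intro l m
    have : ∀ c : CoCfg d S, (α l * chi blk sh d col l (merge d S a c)) *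
      (conj (α m) * conj (chi blk sh d col m (merge d S b c))) = (α l * conj (α m)) *
        (chi blk sh d col l (merge d S a c) * conj (chi blk sh d col m (merge d S b c))) := by
      intro c; ring
    simp only [this, ← Finset.mul_sum]
    by_cases hlm : l = m
    · by_cases hab : a = b
      · subst hlm hab
        simp [chi_self]
      · rw [chi_orth h S hS l m a b (by tauto)]; simp [hab]
    · rw [chi_orth h S hS l m a b (by tauto)]; simp [hlm]
  rw [Finset.sum_comm]
  simp_rw [Finset.sum_comm (s := (Finset.univ : Finset (CoCfg d S)))]
  simp only [h1, Finset.sum_ite_eq, Finset.mem_univ, if_true]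
  by_cases hab : a = b
  · subst hab; simp [Finset.sum_mul]
  · simp [hab]

end

theorem merge_bij (d : ι → ℕ) (S : Finset ι) :
    Function.Bijective (fun y : SubCfg d S × CoCfg d S => merge d S y.1 y.2) := by
  constructor
  · rintro ⟨a, c⟩ ⟨a', c'⟩ h
    have h' : ∀ i, merge d S a c i = merge d S a' c' i := fun i => congrFun h i
    refine Prod.ext (funext fun i => ?_) (funext fun i => ?_)
    · have := h' i.1
      simpa [merge, i.2] using this
    · have := h' i.1
      simpa [merge, i.2] using this
  · intro x
    refine ⟨(fun i => x i.1, fun i => x i.1), ?_⟩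
    funext i
    by_cases hi : i ∈ S <;> simp [merge, hi]

theorem trace_ptr (d : ι → ℕ) (S : Finset ι) (ψ : H d) :
    (ptr d S (dyad d ψ ψ)).trace = dotc d ψ ψ := by
  simp only [Matrix.trace, ptr, dyad, Matrix.diag_apply, Matrix.of_apply, dotc]
  rw [← Fintype.sum_prod_type' (f := fun a c => ψ (merge d S a c) * conj (ψ (merge d S a c)))]
  rw [← (merge_bij d S).sum_comp (fun x => conj (ψ x) * ψ x)]
  exact Finset.sum_congr rfl fun _ _ => mul_comm _ _

theorem scalar_unif (d : ι → ℕ) (S : Finset ι) (ψ : H d) (hψ : IsUnitVec d ψ) (t : ℂ)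
    (h : ptr d S (dyad d ψ ψ) = t • 1) : ptr d S (dyad d ψ ψ) = unifMix d S := by
  have h1 := trace_ptr d S ψ
  rw [h, hψ, Matrix.trace_smul, Matrix.trace_one, smul_eq_mul] at h1
  rw [h, unifMix]
  congr 1
  have : (Fintype.card (SubCfg d S) : ℂ) = ∏ i : S, (d i.1 : ℂ) := by
    simp [Fintype.card_pi]
  rw [← this]
  exact eq_inv_of_mul_eq_one_left h1

theorem main {N : ℕ} {blk : Fin N → Option ι} {sh : Fin N → ℕ} {d : ι → ℕ} {κ r : ℕ}
    {col : Fin N → ℕ} (h : Good blk sh d κ r col) (hd : ∀ i, 0 < d i)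
    (hr : ∃ S : Finset ι, S.card = r) :
    ∃ W : Submodule ℂ (H d), IsUniformSubspace d r W ∧ Module.finrank ℂ W = κ := by
  refine ⟨LinearMap.range (enc blk sh d κ col), ?_, ?_⟩
  · rintro ψ ⟨α, rfl⟩ hψ S hS
    exact scalar_unif d S _ hψ _ (ptr_enc h S hS α)
  · rw [LinearMap.finrank_range_of_inj]
    · simp
    · rw [← LinearMap.ker_eq_bot, LinearMap.ker_eq_bot']
      intro α hα
      obtain ⟨S, hS⟩ := hr
      have h1 := ptr_enc h S hS α
      rw [hα] at h1
      have a : SubCfg d S := fun i => ⟨0, hd i.1⟩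
      have c : CoCfg d S := fun i => ⟨0, hd i.1⟩
      have h2 := congrFun (congrFun h1 a) a
      have hc : (Fintype.card (CoCfg d S) : ℂ) ≠ 0 := by
        have : Nonempty (CoCfg d S) := ⟨c⟩
        exact_mod_cast Fintype.card_ne_zero
      simp only [ptr, dyad, Matrix.of_apply, Pi.zero_apply, zero_mul, Finset.sum_const_zero,
        Matrix.smul_apply, Matrix.one_apply_eq, smul_eq_mul, mul_one] at h2
      have h3 : ∑ l, α l * conj (α l) = 0 := by
        rcases mul_eq_zero.mp h2.symm with h3 | h3
        · exact h3
        · exact absurd h3 hc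
      simp only [Complex.mul_conj] at h3
      have h4 : ∑ l, Complex.normSq (α l) = 0 := by exact_mod_cast h3
      rw [Finset.sum_eq_zero_iff_of_nonneg fun l _ => Complex.normSq_nonneg _] at h4
      funext l
      exact Complex.normSq_eq_zero.mp (h4 l (Finset.mem_univ l))

theorem exists_unit (d : ι → ℕ) (W : Submodule ℂ (H d)) (h : Module.finrank ℂ W = 1) :
    ∃ ψ ∈ W, IsUnitVec d ψ := by
  have hne : W ≠ ⊥ := by
    rintro rfl
    simp at h
  obtain ⟨φ, hφ, h0⟩ := Submodule.exists_mem_ne_zero_of_ne_bot hne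
  have hs : dotc d φ φ = ((∑ x, Complex.normSq (φ x) : ℝ) : ℂ) := by
    simp only [dotc, Complex.ofReal_sum]
    exact Finset.sum_congr rfl fun x _ => by rw [Complex.normSq_eq_conj_mul_self]
  have hpos : 0 < ∑ x, Complex.normSq (φ x) := by
    obtain ⟨x, hx⟩ := Function.ne_iff.mp h0
    exact Finset.sum_pos' (fun _ _ => Complex.normSq_nonneg _)
      ⟨x, Finset.mem_univ x, Complex.normSq_pos.mpr hx⟩
  set n := ∑ x, Complex.normSq (φ x) with hn
  refine ⟨(((Real.sqrt n)⁻¹ : ℝ) : ℂ) • φ, W.smul_mem _ hφ, ?_⟩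
  have h1 : dotc d ((((Real.sqrt n)⁻¹ : ℝ) : ℂ) • φ) ((((Real.sqrt n)⁻¹ : ℝ) : ℂ) • φ) =
      (((Real.sqrt n)⁻¹ * (Real.sqrt n)⁻¹ : ℝ) : ℂ) * dotc d φ φ := by
    simp only [dotc, Finset.mul_sum, Pi.smul_apply, smul_eq_mul, map_mul, Complex.conj_ofReal]
    refine Finset.sum_congr rfl fun x _ => ?_
    push_cast
    ring
  rw [IsUnitVec, h1, hs, ← mul_inv, Real.mul_self_sqrt hpos.le, ← Complex.ofReal_mul,
    inv_mul_cancel₀ hpos.ne', Complex.ofReal_one]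

/-- Graph of the first state. -/
def col1 : Fin 14 → ℕ := ![12018, 2025, 11976, 3430, 6465, 843, 1599, 15367, 8250, 12391, 8399,
  12445, 2704, 3973]

/-- Parties of the qubits of the first state. -/
def blk1 : Fin 14 → Option (Fin 9) := ![some 0, some 1, some 2, some 3, some 4, some 4, some 5,
  some 5, some 6, some 6, some 7, some 7, some 8, some 8]

/-- Bit positions of the qubits of the first state. -/
def sh1 : Fin 14 → ℕ := ![0, 0, 0, 0, 0, 1, 0, 1, 0, 1, 0, 1, 0, 1]

/-- Graph of the code; the first three vertices are the inputs. -/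
def col2 : Fin 14 → ℕ := ![5856, 1264, 6224, 13424, 7374, 14475, 14879, 10547, 15488, 8257, 12571,
  4596, 3453, 2024]

/-- Parties of the qubits of the code. -/
def blk2 : Fin 14 → Option (Fin 7) := ![none, none, none, some 0, some 1, some 2, some 3, some 3,
  some 4, some 4, some 5, some 5, some 6, some 6]

/-- Bit positions of the qubits of the code. -/
def sh2 : Fin 14 → ℕ := ![0, 1, 2, 0, 0, 0, 0, 1, 0, 1, 0, 1, 0, 1]

theorem good1 : Good blk1 sh1 ![2, 2, 2, 2, 4, 4, 4, 4, 4] 1 3 col1 where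
  hcol := by unfold GoodCol; decide +kernel
  inv := by decide +kernel
  flip := by decide +kernel
  injd := by decide +kernel
  injk := by decide +kernel
  hchk := by decide +kernel

theorem good2 : Good blk2 sh2 ![2, 2, 2, 4, 4, 4, 4] 8 2 col2 where
  hcol := by unfold GoodCol; decide +kernel
  inv := by decide +kernel
  flip := by decide +kernel
  injd := by decide +kernel
  injk := by decide +kernel
  hchk := by decide +kernel

end RUnif

open RUnif in
/-- There exists a 3-uniform unit vector in `(ℂ²)^{⊗4} ⊗ (ℂ⁴)^{⊗5}`,
and an 8-dimensional 2-uniform subspace of `(ℂ²)^{⊗3} ⊗ (ℂ⁴)^{⊗4}`. -/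
theorem statement16 :
    (∃ ψ : H ![2, 2, 2, 2, 4, 4, 4, 4, 4],
      IsUnitVec ![2, 2, 2, 2, 4, 4, 4, 4, 4] ψ ∧
      IsUniform ![2, 2, 2, 2, 4, 4, 4, 4, 4] 3 ψ) ∧
    (∃ W : Submodule ℂ (H ![2, 2, 2, 4, 4, 4, 4]),
      IsUniformSubspace ![2, 2, 2, 4, 4, 4, 4] 2 W ∧ Module.finrank ℂ W = 8) := by
  refine ⟨?_, main good2 (by decide) ⟨{0, 1}, by decide⟩⟩
  obtain ⟨W, hW, h1⟩ := main good1 (by decide) ⟨{0, 1, 2}, by decide⟩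
  obtain ⟨ψ, hψ, hu⟩ := exists_unit _ W h1
  exact ⟨ψ, hu, hW ψ hψ hu⟩
end

section
/- There exists a 9-dimensional 5-uniform subspace of (C^3)^{⊗18} (equivalently, a pure quantum error-correcting code ((18, 9, 6))_3). Moreover, there exists a 4-dimensional 5-uniform subspace of the 19-partite space C^2 ⊗ (C^3)^{⊗18}, and a 2-dimensional 5-uniform subspace of the 20-partite space (C^2)^{⊗2} ⊗ (C^3)^{⊗18}. -/
/-!
Common definitions: multipartite systems with parties indexed by a finite type `ι`,
local dimensions `d : ι → ℕ`, vectors as functions on the configuration space,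
partial traces, and `r`-uniform states and subspaces.
-/

open scoped ComplexConjugate Matrix

namespace RUnif.Code

/-! ### Bit-packed ternary arithmetic -/

def addL (al ah bl bh : ℕ) : ℕ :=
  Nat.xor (Nat.xor (Nat.lor al bh) (Nat.lor ah bl)) (Nat.lor ah bh)

def addH (al ah bl bh : ℕ) : ℕ :=
  Nat.xor (Nat.xor (Nat.lor al bh) (Nat.lor ah bl)) (Nat.lor al bl)

/-- `(l, h)` represents the ternary word `w` of length 36. -/
def Rep (l h : ℕ) (w : ℕ → ZMod 3) : Prop :=
  ∀ i < 36, l.testBit i = decide (w i = 1) ∧ h.testBit i = decide (w i = 2)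

theorem Rep.add {al ah bl bh : ℕ} {a b : ℕ → ZMod 3} (ha : Rep al ah a) (hb : Rep bl bh b) :
    Rep (addL al ah bl bh) (addH al ah bl bh) (a + b) := by
  intro i hi
  obtain ⟨h1, h2⟩ := ha i hi
  obtain ⟨h3, h4⟩ := hb i hi
  have e1 : (addL al ah bl bh).testBit i =
      (((al.testBit i || bh.testBit i) ^^ (ah.testBit i || bl.testBit i)) ^^
        (ah.testBit i || bh.testBit i)) := by
    rw [← Nat.testBit_or, ← Nat.testBit_or, ← Nat.testBit_or, ← Nat.testBit_xor,
      ← Nat.testBit_xor]; rfl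
  have e2 : (addH al ah bl bh).testBit i =
      (((al.testBit i || bh.testBit i) ^^ (ah.testBit i || bl.testBit i)) ^^
        (al.testBit i || bl.testBit i)) := by
    rw [← Nat.testBit_or, ← Nat.testBit_or, ← Nat.testBit_or, ← Nat.testBit_xor,
      ← Nat.testBit_xor]; rfl
  rw [e1, e2, h1, h2, h3, h4, Pi.add_apply]
  generalize a i = x
  generalize b i = y
  revert x y
  decide

theorem Rep.neg {al ah : ℕ} {a : ℕ → ZMod 3} (ha : Rep al ah a) : Rep ah al (-a) := by
  intro i hi
  obtain ⟨h1, h2⟩ := ha i hi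
  rw [h1, h2, Pi.neg_apply]
  generalize a i = x
  revert x
  decide

theorem Rep.zero : Rep 0 0 0 := by
  intro i _
  rw [Nat.zero_testBit]
  exact (by decide : false = decide ((0 : ZMod 3) = 1) ∧ false = decide ((0 : ZMod 3) = 2))

/-- Clear the lowest bit. -/
def clr (x : ℕ) : ℕ := Nat.land x (Nat.pred x)

theorem clr_zero : clr 0 = 0 := rfl

theorem clr_iter (k : ℕ) : ∀ (x : ℕ) (S : Finset ℕ), S.card ≤ k →
    (∀ i, x.testBit i = true → i ∈ S) → clr^[k] x = 0 := by
  induction k with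
  | zero =>
    intro x S hS h
    have : S = ∅ := Finset.card_eq_zero.mp (Nat.le_zero.mp hS)
    subst this
    apply Nat.eq_of_testBit_eq
    intro i
    by_contra hne
    have : x.testBit i = true := by
      simpa using hne
    simpa using h i this
  | succ k ih =>
    intro x S hS h
    rw [Function.iterate_succ_apply]
    have hbit : ∀ i, (clr x).testBit i = (x.testBit i && (Nat.pred x).testBit i) := by
      intro i
      exact Nat.testBit_and x (Nat.pred x) i
    rcases Nat.eq_zero_or_pos x with rfl | hx
    · exact ih (clr 0) ∅ (by simp) (by intro i hi; simp [clr_zero] at hi)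
    · have hne : clr x ≠ x := by
        have h1 : clr x ≤ Nat.pred x := Nat.and_le_right
        have h2 : Nat.pred x < x := Nat.pred_lt hx.ne'
        omega
      obtain ⟨i, hi⟩ : ∃ i, (clr x).testBit i ≠ x.testBit i := by
        by_contra hcon
        push Not at hcon
        exact hne (Nat.eq_of_testBit_eq hcon)
      have hxi : x.testBit i = true := by
        by_contra hc
        apply hi
        rw [hbit]
        simp only [Bool.not_eq_true] at hc
        simp [hc]
      have hci : (clr x).testBit i = false := by
        rw [hxi] at hi
        simpa using hi
      apply ih (clr x) (S.erase i)
      · rw [Finset.card_erase_of_mem (h i hxi)]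
        omega
      · intro j hj
        rw [Finset.mem_erase]
        constructor
        · rintro rfl
          rw [hci] at hj
          exact absurd hj (by simp)
        · apply h
          rw [hbit] at hj
          simp at hj
          exact hj.1

/-- Test on the support `z` of a word: it is zero or meets at least six positions. -/
def leafZ (z : ℕ) : Bool :=
  Nat.beq z 0 ||
  !(Nat.beq (clr (clr (clr (clr (clr (Nat.mod (Nat.lor z (Nat.shiftRight z 18)) 262144)))))) 0)

/-- Leaf test for the sum of the words `a` and `b`. -/
def leaf (al ah bl bh : ℕ) : Bool :=
  leafZ (Nat.lor (Nat.xor al bh) (Nat.xor ah bl))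

/-- Combine with all nine linear combinations of two words. -/
def comb (l h l' h' : ℕ) (k : ℕ → ℕ → Bool) : Bool :=
  k 0 0 && k l h && k h l && k l' h' && k h' l' &&
  k (addL l h l' h') (addH l h l' h') && k (addL l h h' l') (addH l h h' l') &&
  k (addL h l l' h') (addH h l l' h') && k (addL h l h' l') (addH h l h' l')

theorem comb_sound {l h l' h' : ℕ} {k : ℕ → ℕ → Bool} {w w' : ℕ → ZMod 3}
    (hw : Rep l h w) (hw' : Rep l' h' w') (hk : comb l h l' h' k = true) (a b : ZMod 3) :
    ∃ p q, Rep p q (a • w + b • w') ∧ k p q = true := by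
  simp only [comb, Bool.and_eq_true] at hk
  obtain ⟨⟨⟨⟨⟨⟨⟨⟨k1, k2⟩, k3⟩, k4⟩, k5⟩, k6⟩, k7⟩, k8⟩, k9⟩ := hk
  have h2 : ∀ v : ℕ → ZMod 3, (2 : ZMod 3) • v = -v := by
    intro v
    have : (2 : ZMod 3) = -1 := by decide
    rw [this, neg_one_smul]
  have hc : ∀ c : ZMod 3, c = 0 ∨ c = 1 ∨ c = 2 := by decide
  rcases hc a with rfl | rfl | rfl <;> rcases hc b with rfl | rfl | rfl <;>
    simp only [h2, zero_smul, one_smul, zero_add, add_zero]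
  · exact ⟨_, _, Rep.zero, k1⟩
  · exact ⟨_, _, hw', k4⟩
  · exact ⟨_, _, hw'.neg, k5⟩
  · exact ⟨_, _, hw, k2⟩
  · exact ⟨_, _, hw.add hw', k6⟩
  · exact ⟨_, _, hw.add hw'.neg, k7⟩
  · exact ⟨_, _, hw.neg, k3⟩
  · exact ⟨_, _, hw.neg.add hw', k8⟩
  · exact ⟨_, _, hw.neg.add hw'.neg, k9⟩

theorem leaf_sound {al ah bl bh : ℕ} {a b : ℕ → ZMod 3} (ha : Rep al ah a) (hb : Rep bl bh b)
    (hl : leaf al ah bl bh = true) (S : Finset ℕ) (hS : S.card ≤ 5)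
    (h0 : ∀ i < 18, i ∉ S → (a + b) i = 0 ∧ (a + b) (i + 18) = 0) :
    ∀ i < 36, (a + b) i = 0 := by
  set z : ℕ := Nat.lor (Nat.xor al bh) (Nat.xor ah bl) with hz
  have hbit : ∀ i < 36, z.testBit i = decide ((a + b) i ≠ 0) := by
    intro i hi
    have e1 : z.testBit i =
        ((al.testBit i ^^ bh.testBit i) || (ah.testBit i ^^ bl.testBit i)) := by
      rw [← Nat.testBit_xor, ← Nat.testBit_xor, ← Nat.testBit_or]; rfl
    obtain ⟨h1, h2⟩ := ha i hi
    obtain ⟨h3, h4⟩ := hb i hi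
    rw [e1, h1, h2, h3, h4, Pi.add_apply]
    generalize a i = x
    generalize b i = y
    revert x y
    decide
  have hcl := clr_iter 5 (Nat.mod (Nat.lor z (Nat.shiftRight z 18)) 262144) S hS (by
    intro i hi
    have e : Nat.mod (Nat.lor z (Nat.shiftRight z 18)) 262144 = (z ||| (z >>> 18)) % 2 ^ 18 := by
      norm_num
      rfl
    rw [e, Nat.testBit_mod_two_pow, Nat.testBit_or, Nat.testBit_shiftRight] at hi
    simp only [Bool.and_eq_true, decide_eq_true_eq, Bool.or_eq_true] at hi
    obtain ⟨hi18, hi⟩ := hi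
    by_contra hiS
    obtain ⟨p, q⟩ := h0 i hi18 hiS
    rw [hbit i (by omega), hbit (18 + i) (by omega), add_comm 18 i, p, q] at hi
    simp at hi)
  have hz0 : z = 0 := by
    have hl' : leafZ z = true := hl
    simp only [Function.iterate_succ, Function.iterate_zero, Function.comp, id] at hcl
    simp only [leafZ, hcl] at hl'
    simpa using hl'
  intro i hi
  have := hbit i hi
  rw [hz0] at this
  simpa using this.symm

def allLt : ℕ → (ℕ → Bool) → Bool
  | 0, _ => true
  | n + 1, f => f n && allLt n f

theorem allLt_sound {n : ℕ} {f : ℕ → Bool} (h : allLt n f = true) : ∀ i < n, f i = true := by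
  induction n with
  | zero => intro i hi; omega
  | succ n ih =>
    simp only [allLt, Bool.and_eq_true] at h
    intro i hi
    rcases Nat.lt_succ_iff_lt_or_eq.mp hi with h' | rfl
    · exact ih h.2 i h'
    · exact h.1

/-- Extract the `k`-th block of 36 bits. -/
def row (D k : ℕ) : ℕ := Nat.mod (Nat.shiftRight D (Nat.mul 36 k)) 68719476736

def check (L H : ℕ) : Bool :=
  allLt 9 fun j => allLt j fun i =>
    comb (row L (Nat.mul 2 i)) (row H (Nat.mul 2 i))
        (row L (Nat.add (Nat.mul 2 i) 1)) (row H (Nat.add (Nat.mul 2 i) 1)) fun pl ph =>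
      comb (row L (Nat.mul 2 j)) (row H (Nat.mul 2 j))
          (row L (Nat.add (Nat.mul 2 j) 1)) (row H (Nat.add (Nat.mul 2 j) 1)) fun ql qh =>
        comb (row L 18) (row H 18) (row L 19) (row H 19) fun kl kh =>
          leaf (addL pl ph ql qh) (addH pl ph ql qh) kl kh

def L0 : ℕ := 1021989633730885012722097863989784964559904155447389402250646018476998412099802709602566540513511074333708696088992102865765847274304696196219264282675757472040561100905681627509410235972306643113
def H0 : ℕ := 14027029070795661955412198785492816230400573682034076386627065337005399552542662485235802206650124549824517499513910716774895849461639912475609295364664879258571321500822817371572417083827882333285113906394693634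
def L1 : ℕ := 7013487780963111615682960226797644608105036041220622671882595015553705571282044571528039328436126209679976161668414916993443226460089637712040486411948045506215376258879252121345590500134992727091457532106985810
def H1 : ℕ := 26754434720310156745291433849568646263483676609636492848841314755760774218154609504487685327252889317630270764484423166375575681103520850890392063674993783905997515328543021881013035352901838025935852404741

theorem check0 : check L0 H0 = true := by decide +kernel

theorem check1 : check L1 H1 = true := by decide +kernel

/-! ### The code -/

/-- Adjacency matrix of the circulant graph on 18 vertices with jumps 1, 3, 4. -/
def adj (i j : Fin 18) : ZMod 3 :=
  if (i - j).val ∈ [1, 3, 4, 14, 15, 17] then 1 else 0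

def bm (i : Fin 18) (k : Fin 2) : ZMod 3 :=
  if k = 0 then 1 else if i.val % 2 = 0 then 1 else 2

def tw (s : Fin 18 → ZMod 3) (u : Fin 2 → ZMod 3) (i : Fin 18) : ZMod 3 :=
  ∑ j, adj i j * s j + ∑ k, bm i k * u k

def wd (s : Fin 18 → ZMod 3) (u : Fin 2 → ZMod 3) (i : ℕ) : ZMod 3 :=
  if h : i < 18 then s ⟨i, h⟩ else if h : i - 18 < 18 then tw s u ⟨i - 18, h⟩ else 0

def dec (L H : ℕ) (k i : ℕ) : ZMod 3 :=
  if L.testBit (36 * k + i) then 1 else if H.testBit (36 * k + i) then 2 else 0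

def pos (e : Fin 2) (k : Fin 9) : Fin 18 := ⟨2 * k.val + e.val, by omega⟩

theorem rep_row {L H : ℕ} (hLH : Nat.land L H = 0) (k : ℕ) :
    Rep (row L k) (row H k) (dec L H k) := by
  intro i hi
  have e : ∀ D : ℕ, (row D k).testBit i = D.testBit (36 * k + i) := by
    intro D
    have : row D k = (D >>> (36 * k)) % 2 ^ 36 := by
      norm_num
      rfl
    rw [this, Nat.testBit_mod_two_pow, Nat.testBit_shiftRight]
    simp [hi]
  rw [e, e]
  have hb : (L.testBit (36 * k + i) && H.testBit (36 * k + i)) = false := by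
    rw [← Nat.testBit_and]
    have : L &&& H = 0 := hLH
    rw [this, Nat.zero_testBit]
  unfold dec
  revert hb
  generalize L.testBit (36 * k + i) = x
  generalize H.testBit (36 * k + i) = y
  revert x y
  decide

/-- Generator matrix in graph form. -/
def gm (r : Fin 18 ⊕ Fin 18) (c : Fin 18 ⊕ Fin 2) : ZMod 3 :=
  match r, c with
  | .inl i, .inl j => if i = j then 1 else 0
  | .inl _, .inr _ => 0
  | .inr i, .inl j => adj i j
  | .inr i, .inr k => bm i k

def pm (e : Fin 2) (r : (Fin 9 ⊕ Fin 9) ⊕ Fin 2) (c : Fin 18 ⊕ Fin 2) : ZMod 3 :=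
  match r with
  | .inl (.inl k) => gm (.inl (pos e k)) c
  | .inl (.inr k) => gm (.inr (pos e k)) c
  | .inr k => if c = .inr k then 1 else 0

def idx : Fin 18 ⊕ Fin 18 → ℕ
  | .inl i => i.val
  | .inr i => i.val + 18

def sysm (L H : ℕ) (r : Fin 18 ⊕ Fin 18) (c : (Fin 9 ⊕ Fin 9) ⊕ Fin 2) : ZMod 3 :=
  match c with
  | .inl (.inl k) => dec L H (2 * k.val) (idx r)
  | .inl (.inr k) => dec L H (2 * k.val + 1) (idx r)
  | .inr k => dec L H (18 + k.val) (idx r)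

/-- `L, H` is a systematic form of the generator matrix with respect to the half `e`. -/
def IsSys (e : Fin 2) (L H : ℕ) : Prop :=
  ∀ r c, gm r c = ∑ k, sysm L H r k * pm e k c

theorem sys0 : IsSys 0 L0 H0 := by
  unfold IsSys
  decide +kernel

theorem sys1 : IsSys 1 L1 H1 := by
  unfold IsSys
  decide +kernel

theorem wd_inl (s : Fin 18 → ZMod 3) (u : Fin 2 → ZMod 3) (i : Fin 18) :
    wd s u (idx (.inl i)) = s i := by
  simp [wd, idx]

theorem wd_inr (s : Fin 18 → ZMod 3) (u : Fin 2 → ZMod 3) (i : Fin 18) :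
    wd s u (idx (.inr i)) = tw s u i := by
  simp [wd, idx]

theorem wd_idx (s : Fin 18 → ZMod 3) (u : Fin 2 → ZMod 3) (r : Fin 18 ⊕ Fin 18) :
    wd s u (idx r) = (Matrix.of gm).mulVec (Sum.elim s u) r := by
  rcases r with i | i
  · rw [wd_inl]
    simp [Matrix.mulVec, dotProduct, gm]
  · rw [wd_inr]
    simp [Matrix.mulVec, dotProduct, gm, tw]

theorem exists_idx (i : ℕ) (hi : i < 36) : ∃ r, idx r = i := by
  by_cases h : i < 18
  · exact ⟨.inl ⟨i, h⟩, rfl⟩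
  · exact ⟨.inr ⟨i - 18, by omega⟩, by simp only [idx]; omega⟩

theorem wd_decomp {e : Fin 2} {L H : ℕ} (hs : IsSys e L H) (s : Fin 18 → ZMod 3)
    (u : Fin 2 → ZMod 3) (i : ℕ) (hi : i < 36) :
    wd s u i = ∑ k : Fin 9, (s (pos e k) * dec L H (2 * k.val) i +
      tw s u (pos e k) * dec L H (2 * k.val + 1) i) +
      (u 0 * dec L H 18 i + u 1 * dec L H 19 i) := by
  obtain ⟨r, rfl⟩ := exists_idx i hi
  have hG : Matrix.of gm = Matrix.of (sysm L H) * Matrix.of (pm e) := by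
    ext r c
    rw [Matrix.mul_apply]
    exact hs r c
  rw [wd_idx, hG, ← Matrix.mulVec_mulVec]
  have h1 : ∀ k, (Matrix.of (pm e)).mulVec (Sum.elim s u) (.inl (.inl k)) = s (pos e k) := by
    intro k
    rw [← wd_inl s u, wd_idx]
    rfl
  have h2 : ∀ k, (Matrix.of (pm e)).mulVec (Sum.elim s u) (.inl (.inr k)) = tw s u (pos e k) := by
    intro k
    rw [← wd_inr s u, wd_idx]
    rfl
  have h3 : ∀ k, (Matrix.of (pm e)).mulVec (Sum.elim s u) (.inr k) = u k := by
    intro k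
    simp [Matrix.mulVec, dotProduct, pm]
  rw [Matrix.mulVec, dotProduct, Fintype.sum_sum_type, Fintype.sum_sum_type]
  simp only [h1, h2, h3, Matrix.of_apply, sysm, Fin.sum_univ_two, Finset.sum_add_distrib]
  simp [mul_comm]

theorem exists_pair (T : Finset (Fin 9)) (hT : T.card ≤ 2) :
    ∃ i j : Fin 9, i < j ∧ T ⊆ {i, j} := by
  obtain ⟨U, hTU, hU⟩ := Finset.exists_superset_card_eq hT (by simp)
  obtain ⟨x, y, hxy, rfl⟩ := Finset.card_eq_two.mp hU
  rcases lt_or_gt_of_ne hxy with h | h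
  · exact ⟨x, y, h, hTU⟩
  · exact ⟨y, x, h, by rwa [Finset.pair_comm]⟩

theorem half_sound {e : Fin 2} {L H : ℕ} (hs : IsSys e L H) (hLH : Nat.land L H = 0)
    (hc : check L H = true) (S : Finset (Fin 18)) (hS : S.card ≤ 5)
    (s : Fin 18 → ZMod 3) (u : Fin 2 → ZMod 3) (hs0 : ∀ i ∉ S, s i = 0)
    (ht0 : ∀ i ∉ S, tw s u i = 0)
    (hT : (Finset.univ.filter fun k : Fin 9 => pos e k ∈ S).card ≤ 2) :
    ∀ i < 36, wd s u i = 0 := by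
  obtain ⟨i, j, hij, hsub⟩ := exists_pair _ hT
  have hz : ∀ k, k ≠ i → k ≠ j → s (pos e k) = 0 ∧ tw s u (pos e k) = 0 := by
    intro k hki hkj
    have : pos e k ∉ S := by
      intro hk
      have := hsub (Finset.mem_filter.mpr ⟨Finset.mem_univ k, hk⟩)
      simp [hki, hkj] at this
    exact ⟨hs0 _ this, ht0 _ this⟩
  have hck := allLt_sound (allLt_sound hc j.val j.isLt) i.val hij
  obtain ⟨pl, ph, hp, hck⟩ := comb_sound (rep_row hLH _) (rep_row hLH _) hck
    (s (pos e i)) (tw s u (pos e i))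
  obtain ⟨ql, qh, hq, hck⟩ := comb_sound (rep_row hLH _) (rep_row hLH _) hck
    (s (pos e j)) (tw s u (pos e j))
  obtain ⟨kl, kh, hk, hck⟩ := comb_sound (rep_row hLH _) (rep_row hLH _) hck (u 0) (u 1)
  have hw : ∀ m < 36, ((s (pos e i) • dec L H (Nat.mul 2 i.val) +
      tw s u (pos e i) • dec L H (Nat.add (Nat.mul 2 i.val) 1)) +
      (s (pos e j) • dec L H (Nat.mul 2 j.val) +
      tw s u (pos e j) • dec L H (Nat.add (Nat.mul 2 j.val) 1)) +
      (u 0 • dec L H 18 + u 1 • dec L H 19)) m = wd s u m := by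
    intro m hm
    rw [wd_decomp hs s u m hm]
    rw [← Finset.sum_subset (Finset.subset_univ ({i, j} : Finset (Fin 9))),
      Finset.sum_pair hij.ne]
    · rfl
    · intro k _ hk
      simp only [Finset.mem_insert, Finset.mem_singleton, not_or] at hk
      obtain ⟨h1, h2⟩ := hz k hk.1 hk.2
      rw [h1, h2]
      simp
  have := leaf_sound (hp.add hq) hk hck (S.map Fin.valEmbedding) (by simpa using hS) (by
    intro m hm hmS
    have hmS' : (⟨m, hm⟩ : Fin 18) ∉ S := by
      intro h
      apply hmS
      exact Finset.mem_map.mpr ⟨_, h, rfl⟩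
    rw [hw m (by omega), hw (m + 18) (by omega)]
    have h1 := wd_inl s u ⟨m, hm⟩
    have h2 := wd_inr s u ⟨m, hm⟩
    simp only [idx] at h1 h2
    rw [h1, h2]
    exact ⟨hs0 _ hmS', ht0 _ hmS'⟩)
  intro m hm
  rw [← hw m hm]
  exact this m hm

theorem pos_cover (x : Fin 18) : ∃ e k, pos e k = x := by
  revert x
  decide

theorem distance (S : Finset (Fin 18)) (hS : S.card ≤ 5)
    (s : Fin 18 → ZMod 3) (u : Fin 2 → ZMod 3) (hs0 : ∀ i ∉ S, s i = 0)
    (ht0 : ∀ i ∉ S, tw s u i = 0) : s = 0 ∧ u = 0 := by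
  have key : ∀ i < 36, wd s u i = 0 := by
    by_cases hT : (Finset.univ.filter fun k : Fin 9 => pos 0 k ∈ S).card ≤ 2
    · exact half_sound sys0 (by decide +kernel) check0 S hS s u hs0 ht0 hT
    · refine half_sound sys1 (by decide +kernel) check1 S hS s u hs0 ht0 ?_
      have inj : ∀ e, Function.Injective (pos e) := by decide
      have hsum : ((Finset.univ.filter fun k : Fin 9 => pos 0 k ∈ S).map ⟨pos 0, inj 0⟩ ∪
          (Finset.univ.filter fun k : Fin 9 => pos 1 k ∈ S).map ⟨pos 1, inj 1⟩).card ≤ 5 := by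
        refine le_trans (Finset.card_le_card ?_) hS
        intro x hx
        simp only [Finset.mem_union, Finset.mem_map, Finset.mem_filter, Finset.mem_univ,
          true_and, Function.Embedding.coeFn_mk] at hx
        rcases hx with ⟨k, hk, rfl⟩ | ⟨k, hk, rfl⟩ <;> exact hk
      rw [Finset.card_union_of_disjoint, Finset.card_map, Finset.card_map] at hsum
      · omega
      · rw [Finset.disjoint_left]
        intro x hx hx'
        simp only [Finset.mem_map, Finset.mem_filter, Finset.mem_univ,
          true_and, Function.Embedding.coeFn_mk] at hx hx'
        obtain ⟨k, _, rfl⟩ := hx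
        obtain ⟨k', _, h⟩ := hx'
        have := congrArg Fin.val h
        simp [pos] at this
        omega
  have hs : s = 0 := by
    funext i
    rw [← wd_inl s u i]
    exact key _ (by simp only [idx]; omega)
  refine ⟨hs, ?_⟩
  have ht : ∀ i, tw s u i = 0 := by
    intro i
    rw [← wd_inr s u i]
    exact key _ (by simp only [idx]; omega)
  have h0 := ht 0
  have h1 := ht 1
  subst hs
  simp only [tw, Pi.zero_apply, mul_zero, Finset.sum_const_zero, zero_add, Fin.sum_univ_two] at h0 h1
  have hb : bm 0 0 = 1 ∧ bm 0 1 = 1 ∧ bm 1 0 = 1 ∧ bm 1 1 = 2 := by decide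
  rw [hb.1, hb.2.1] at h0
  rw [hb.2.2.1, hb.2.2.2] at h1
  have : ∀ x y : ZMod 3, 1 * x + 1 * y = 0 → 1 * x + 2 * y = 0 → x = 0 ∧ y = 0 := by decide
  obtain ⟨a, b⟩ := this _ _ h0 h1
  funext k
  fin_cases k
  · exact a
  · exact b

theorem adj_symm (i j : Fin 18) : adj i j = adj j i := by
  revert i j
  decide +kernel

end RUnif.Code
namespace RUnif

section General

variable {ι : Type} [Fintype ι] [DecidableEq ι]

/-- Two configurations agree on `S`. -/
def Agree (d : ι → ℕ) (S : Finset ι) (x a : Cfg d) : Prop := ∀ i ∈ S, x i = a i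

noncomputable instance (d : ι → ℕ) (S : Finset ι) (x a : Cfg d) : Decidable (Agree d S x a) :=
  Classical.propDecidable _

/-- Sums over configurations fixed on `S` factorize. -/
theorem sum_fixed (d : ι → ℕ) (S : Finset ι) (a : Cfg d) (g : ∀ i, Fin (d i) → ℂ) :
    (∑ x : Cfg d, if Agree d S x a then ∏ i, g i (x i) else 0) =
      ∏ i, if i ∈ S then g i (a i) else ∑ y, g i y := by
  have h : ∀ i, (if i ∈ S then g i (a i) else ∑ y, g i y) =
      ∑ y, if i ∈ S → y = a i then g i y else 0 := by
    intro i
    by_cases hi : i ∈ S <;> simp [hi]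
  rw [Finset.prod_congr rfl fun i _ => h i, Finset.prod_univ_sum, Fintype.piFinset_univ]
  refine Finset.sum_congr rfl fun x _ => ?_
  rw [Finset.prod_ite_zero]
  by_cases hA : Agree d S x a
  · rw [if_pos hA, if_pos fun i _ => hA i]
  · rw [if_neg hA, if_neg fun hh => hA fun i hi => hh i (Finset.mem_univ i) hi]

/-- The (unnormalized) key property of a family of vectors: all reductions of
`|Φ u⟩⟨Φ v|` to at most `r` parties are `N δ_{uv}` times the maximally mixed state. -/
def KP (d : ι → ℕ) {I : Type} [DecidableEq I] (r : ℕ) (N : ℂ) (Φ : I → H d) : Prop :=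
  ∀ S : Finset ι, S.card ≤ r → ∀ (a b : Cfg d) (u v : I),
    (∑ x : Cfg d, if Agree d S x a then Φ u x * conj (Φ v (S.piecewise b x)) else 0) =
      if u = v ∧ Agree d S a b then N * (∏ i ∈ S, (d i : ℂ))⁻¹ else 0

theorem merge_mem (d : ι → ℕ) (S : Finset ι) (a : SubCfg d S) (c : CoCfg d S) (i : ι)
    (h : i ∈ S) : merge d S a c i = a ⟨i, h⟩ := by
  simp [merge, h]

theorem merge_not_mem (d : ι → ℕ) (S : Finset ι) (a : SubCfg d S) (c : CoCfg d S) (i : ι)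
    (h : i ∉ S) : merge d S a c i = c ⟨i, h⟩ := by
  simp [merge, h]

theorem sum_co (d : ι → ℕ) (S : Finset ι) (a b : SubCfg d S) (c0 : CoCfg d S)
    (F : Cfg d → Cfg d → ℂ) :
    (∑ c : CoCfg d S, F (merge d S a c) (merge d S b c)) =
      ∑ x : Cfg d, if Agree d S x (merge d S a c0) then
        F x (S.piecewise (merge d S b c0) x) else 0 := by
  rw [← Finset.sum_filter]
  refine Finset.sum_nbij' (fun c => merge d S a c) (fun x i => x i.1) ?_ ?_ ?_ ?_ ?_
  · intro c _
    simp only [Finset.mem_filter, Finset.mem_univ, true_and]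
    intro i hi
    rw [merge_mem _ _ _ _ _ hi, merge_mem _ _ _ _ _ hi]
  · intro x _
    exact Finset.mem_univ _
  · intro c _
    funext i
    exact merge_not_mem _ _ _ _ _ i.2
  · intro x hx
    simp only [Finset.mem_filter, Finset.mem_univ, true_and] at hx
    funext i
    by_cases hi : i ∈ S
    · rw [hx i hi, merge_mem _ _ _ _ _ hi, merge_mem _ _ _ _ _ hi]
    · rw [merge_not_mem _ _ _ _ _ hi]
  · intro c _
    congr 1
    funext i
    by_cases hi : i ∈ S
    · rw [Finset.piecewise_eq_of_mem _ _ _ hi, merge_mem _ _ _ _ _ hi, merge_mem _ _ _ _ _ hi]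
    · rw [Finset.piecewise_eq_of_notMem _ _ _ hi, merge_not_mem _ _ _ _ _ hi,
        merge_not_mem _ _ _ _ _ hi]

theorem KP.sum_lin {d : ι → ℕ} {I : Type} [DecidableEq I] [Fintype I] {r : ℕ} {N : ℂ}
    {Φ : I → H d} (h : KP d r N Φ) (S : Finset ι) (hS : S.card ≤ r) (a b : Cfg d) (k : I → ℂ) :
    (∑ x : Cfg d, if Agree d S x a then
        (∑ u, k u • Φ u) x * conj ((∑ u, k u • Φ u) (S.piecewise b x)) else 0) =
      if Agree d S a b then (∑ u, k u * conj (k u)) * N * (∏ i ∈ S, (d i : ℂ))⁻¹ else 0 := by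
  have e : ∀ x : Cfg d, (if Agree d S x a then
        (∑ u, k u • Φ u) x * conj ((∑ u, k u • Φ u) (S.piecewise b x)) else 0) =
      ∑ u, ∑ v, k u * conj (k v) *
        (if Agree d S x a then Φ u x * conj (Φ v (S.piecewise b x)) else 0) := by
    intro x
    split_ifs
    · simp only [Finset.sum_apply, Pi.smul_apply, smul_eq_mul, map_sum, map_mul,
        Finset.sum_mul_sum]
      refine Finset.sum_congr rfl fun u _ => Finset.sum_congr rfl fun v _ => ?_
      ring
    · simp
  rw [Finset.sum_congr rfl fun x _ => e x, Finset.sum_comm]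
  have e2 : ∀ u, (∑ x : Cfg d, ∑ v, k u * conj (k v) *
        (if Agree d S x a then Φ u x * conj (Φ v (S.piecewise b x)) else 0)) =
      if Agree d S a b then k u * conj (k u) * N * (∏ i ∈ S, (d i : ℂ))⁻¹ else 0 := by
    intro u
    rw [Finset.sum_comm]
    simp only [← Finset.mul_sum, h S hS a b]
    by_cases hab : Agree d S a b
    · simp [hab, mul_assoc]
    · simp [hab]
  rw [Finset.sum_congr rfl fun u _ => e2 u]
  split_ifs
  · rw [Finset.sum_mul, Finset.sum_mul]
  · simp

theorem KP.dotc {d : ι → ℕ} {I : Type} [DecidableEq I] [Fintype I] {r : ℕ} {N : ℂ}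
    {Φ : I → H d} (h : KP d r N Φ) (x0 : Cfg d) (k : I → ℂ) :
    dotc d (∑ u, k u • Φ u) (∑ u, k u • Φ u) = (∑ u, k u * conj (k u)) * N := by
  have := h.sum_lin ∅ (by simp) x0 x0 k
  have hA : ∀ x y : Cfg d, Agree d ∅ x y := by
    intro x y i hi
    simp at hi
  simp only [hA, if_true, Finset.piecewise_empty, Finset.prod_empty, inv_one, mul_one] at this
  rw [← this]
  unfold RUnif.dotc
  exact Finset.sum_congr rfl fun x _ => mul_comm _ _

theorem KP.exists_subspace {d : ι → ℕ} {I : Type} [DecidableEq I] [Fintype I] {r : ℕ} {N : ℂ}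
    {Φ : I → H d} (h : KP d r N Φ) (hN : N ≠ 0) (x0 : Cfg d) :
    ∃ W : Submodule ℂ (H d), IsUniformSubspace d r W ∧ Module.finrank ℂ W = Fintype.card I := by
  refine ⟨Submodule.span ℂ (Set.range Φ), ?_, ?_⟩
  · intro ψ hψ hunit S hS
    obtain ⟨k, rfl⟩ := (Submodule.mem_span_range_iff_exists_fun ℂ).mp hψ
    unfold IsUnitVec at hunit
    rw [h.dotc x0] at hunit
    ext a b
    have := sum_co d S a b (fun i => x0 i.1)
      (fun x y => (∑ u, k u • Φ u) x * conj ((∑ u, k u • Φ u) y))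
    rw [h.sum_lin S hS.le, hunit, one_mul] at this
    refine Eq.trans this ?_
    have hiff : Agree d S (merge d S a fun i => x0 i.1) (merge d S b fun i => x0 i.1) ↔
        a = b := by
      constructor
      · intro hh
        funext i
        have := hh i.1 i.2
        rwa [merge_mem _ _ _ _ _ i.2, merge_mem _ _ _ _ _ i.2] at this
      · rintro rfl i _
        rfl
    rw [unifMix, Matrix.smul_apply, Matrix.one_apply]
    simp only [hiff]
    rw [← Finset.prod_coe_sort S (fun i => (d i : ℂ))]
    split_ifs <;> simp
  · apply finrank_span_eq_card
    rw [Fintype.linearIndependent_iff]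
    intro k hk
    have h1 := h.dotc x0 k
    rw [hk] at h1
    have h2 : (∑ u, k u * conj (k u)) = 0 := by
      have : RUnif.dotc d 0 0 = 0 := by simp [RUnif.dotc]
      rw [this] at h1
      rcases mul_eq_zero.mp h1.symm with h | h
      · exact h
      · exact absurd h hN
    simp only [Complex.mul_conj] at h2
    rw [← Complex.ofReal_sum, Complex.ofReal_eq_zero,
      Finset.sum_eq_zero_iff_of_nonneg fun _ _ => Complex.normSq_nonneg _] at h2
    intro u
    exact Complex.normSq_eq_zero.mp (h2 u (Finset.mem_univ u))

/-- Attach the parties `κ` (of dimension `2`) entangled with part of the code space. -/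
theorem KP.attach {κ : Type} [Fintype κ] [DecidableEq κ] {d : ι → ℕ} {I J : Type}
    [DecidableEq I] [DecidableEq J] {r : ℕ} {N : ℂ} {Φ : I → H d} (h : KP d r N Φ)
    (e : J × (κ → Fin 2) ↪ I) :
    KP (Sum.elim (fun _ : κ => 2) d) r ((2 : ℂ) ^ Fintype.card κ * N)
      (fun (j : J) (z : Cfg (Sum.elim (fun _ : κ => 2) d)) =>
        Φ (e (j, fun i => z (.inl i))) (fun i => z (.inr i))) := by
  intro S hS a b u v
  set S1 : Finset κ := Finset.univ.filter fun i => Sum.inl i ∈ S with hS1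
  set S2 : Finset ι := Finset.univ.filter fun i => Sum.inr i ∈ S with hS2
  have hSd : S = S1.disjSum S2 := by
    ext i
    rcases i with i | i <;> simp [hS1, hS2]
  have hcard : S1.card + S2.card = S.card := by
    rw [hSd, Finset.card_disjSum]
  let a1 : κ → Fin 2 := fun i => a (.inl i)
  let a2 : Cfg d := fun i => a (.inr i)
  let b1 : κ → Fin 2 := fun i => b (.inl i)
  let b2 : Cfg d := fun i => b (.inr i)
  rw [← (Equiv.sumPiEquivProdPi
    (fun i : κ ⊕ ι => Fin (Sum.elim (fun _ : κ => 2) d i))).symm.sum_comp, Fintype.sum_prod_type]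
  have hall : ∀ p q : Cfg (Sum.elim (fun _ : κ => 2) d), Agree _ S p q ↔
      Agree (fun _ : κ => 2) S1 (fun i => p (.inl i)) (fun i => q (.inl i)) ∧
      Agree d S2 (fun i => p (.inr i)) (fun i => q (.inr i)) := by
    intro p q
    constructor
    · intro hP
      exact ⟨fun i hi => hP _ (by simpa [hS1] using hi), fun i hi => hP _ (by simpa [hS2] using hi)⟩
    · rintro ⟨h1, h2⟩ (i | i) hi
      · exact h1 i (by simpa [hS1] using hi)
      · exact h2 i (by simpa [hS2] using hi)
  have step : ∀ y : κ → Fin 2, (∑ x : Cfg d,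
      if Agree _ S ((Equiv.sumPiEquivProdPi
          (fun i : κ ⊕ ι => Fin (Sum.elim (fun _ : κ => 2) d i))).symm (y, x)) a then
        Φ (e (u, y)) x * conj (Φ (e (v, S1.piecewise b1 y)) (S2.piecewise b2 x)) else 0) =
      (if Agree (fun _ : κ => 2) S1 y a1 then (1 : ℂ) else 0) *
        (if u = v ∧ Agree _ S a b then N * (∏ i ∈ S2, (d i : ℂ))⁻¹ else 0) := by
    intro y
    by_cases hy : Agree (fun _ : κ => 2) S1 y a1
    · have hmain := h S2 (by omega) a2 b2 (e (u, y)) (e (v, S1.piecewise b1 y))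
      rw [if_pos hy, one_mul]
      refine Eq.trans (Finset.sum_congr rfl fun x _ => ?_) (hmain.trans ?_)
      · refine if_congr ?_ rfl rfl
        rw [hall]
        exact ⟨fun hh => hh.2, fun hh => ⟨hy, hh⟩⟩
      · refine if_congr ?_ rfl rfl
        rw [e.injective.eq_iff, Prod.mk.injEq, and_assoc, hall]
        refine and_congr_right fun _ => and_congr ?_ Iff.rfl
        constructor
        · intro hh i hi
          have := congrFun hh i
          rw [Finset.piecewise_eq_of_mem _ _ _ hi, hy i hi] at this
          exact this
        · intro hh
          funext i
          by_cases hi : i ∈ S1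
          · rw [Finset.piecewise_eq_of_mem _ _ _ hi, hy i hi]
            exact hh i hi
          · rw [Finset.piecewise_eq_of_notMem _ _ _ hi]
    · rw [if_neg hy, zero_mul]
      refine Finset.sum_eq_zero fun x _ => if_neg fun hh => hy ((hall _ _).mp hh).1
  have hcount : (∑ y : κ → Fin 2, if Agree (fun _ : κ => 2) S1 y a1 then (1 : ℂ) else 0) =
      (2 : ℂ) ^ Fintype.card κ * (∏ i ∈ S1, (2 : ℂ))⁻¹ := by
    have := sum_fixed (fun _ : κ => 2) S1 a1 (fun _ _ => 1)
    simp only [Finset.prod_const_one] at this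
    refine Eq.trans this ?_
    rw [eq_mul_inv_iff_mul_eq₀ (by simp)]
    have e1 : (∏ i ∈ S1, (2 : ℂ)) = ∏ i : κ, if i ∈ S1 then (2 : ℂ) else 1 := by
      rw [Finset.prod_ite_mem, Finset.univ_inter]
    rw [e1, ← Finset.prod_mul_distrib]
    have e2 : ∀ i : κ, ((if i ∈ S1 then (1 : ℂ) else ∑ _y : Fin 2, 1) *
        if i ∈ S1 then (2 : ℂ) else 1) = 2 := by
      intro i
      split_ifs <;> simp
    rw [Finset.prod_congr rfl fun i _ => e2 i]
    simp
  have hprod : (∏ i ∈ S, ((Sum.elim (fun _ : κ => 2) d i : ℕ) : ℂ)) =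
      (∏ i ∈ S1, (2 : ℂ)) * ∏ i ∈ S2, (d i : ℂ) := by
    conv_lhs => rw [hSd]
    rw [Finset.prod_disjSum]
    simp
  have hgoal : ∀ y : κ → Fin 2, (∑ x : Cfg d,
      if Agree _ S ((Equiv.sumPiEquivProdPi
          (fun i : κ ⊕ ι => Fin (Sum.elim (fun _ : κ => 2) d i))).symm (y, x)) a then
        Φ (e (u, fun i => (Equiv.sumPiEquivProdPi
          (fun i : κ ⊕ ι => Fin (Sum.elim (fun _ : κ => 2) d i))).symm (y, x) (.inl i)))
          (fun i => (Equiv.sumPiEquivProdPi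
          (fun i : κ ⊕ ι => Fin (Sum.elim (fun _ : κ => 2) d i))).symm (y, x) (.inr i)) *
        conj (Φ (e (v, fun i => S.piecewise b ((Equiv.sumPiEquivProdPi
          (fun i : κ ⊕ ι => Fin (Sum.elim (fun _ : κ => 2) d i))).symm (y, x)) (.inl i)))
          (fun i => S.piecewise b ((Equiv.sumPiEquivProdPi
          (fun i : κ ⊕ ι => Fin (Sum.elim (fun _ : κ => 2) d i))).symm (y, x)) (.inr i)))
          else 0) =
      (if Agree (fun _ : κ => 2) S1 y a1 then (1 : ℂ) else 0) *
        (if u = v ∧ Agree _ S a b then N * (∏ i ∈ S2, (d i : ℂ))⁻¹ else 0) := by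
    intro y
    rw [← step y]
    refine Finset.sum_congr rfl fun x _ => ?_
    have p1 : (fun i => S.piecewise b ((Equiv.sumPiEquivProdPi
          (fun i : κ ⊕ ι => Fin (Sum.elim (fun _ : κ => 2) d i))).symm (y, x)) (.inl i)) =
          S1.piecewise b1 y := by
      funext i
      by_cases hi : Sum.inl i ∈ S
      · rw [Finset.piecewise_eq_of_mem _ _ _ hi,
          Finset.piecewise_eq_of_mem _ _ _ (by simpa [hS1] using hi)]
      · rw [Finset.piecewise_eq_of_notMem _ _ _ hi,
          Finset.piecewise_eq_of_notMem _ _ _ (by simpa [hS1] using hi)]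
        rfl
    have p2 : (fun i => S.piecewise b ((Equiv.sumPiEquivProdPi
          (fun i : κ ⊕ ι => Fin (Sum.elim (fun _ : κ => 2) d i))).symm (y, x)) (.inr i)) =
          S2.piecewise b2 x := by
      funext i
      by_cases hi : Sum.inr i ∈ S
      · rw [Finset.piecewise_eq_of_mem _ _ _ hi,
          Finset.piecewise_eq_of_mem _ _ _ (by simpa [hS2] using hi)]
      · rw [Finset.piecewise_eq_of_notMem _ _ _ hi,
          Finset.piecewise_eq_of_notMem _ _ _ (by simpa [hS2] using hi)]
        rfl
    rw [p1, p2]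
    rfl
  refine Eq.trans (Finset.sum_congr rfl fun y _ => hgoal y) ?_
  rw [← Finset.sum_mul, hprod]
  refine Eq.trans (congrArg (· * _) hcount) ?_
  split_ifs
  · rw [mul_inv]
    ring
  · rw [mul_zero]

end General

/-! ### The graph code states -/

namespace Code

open Matrix

/-- A configuration as a ternary vector. -/
def vec (x : Cfg (fun _ : Fin 18 => 3)) : Fin 18 → ZMod 3 := x

/-- The quadratic phase. -/
def phase (u : Fin 2 → ZMod 3) (x : Fin 18 → ZMod 3) : ZMod 3 :=
  -(x ⬝ᵥ (Matrix.of adj *ᵥ x)) + x ⬝ᵥ (Matrix.of bm *ᵥ u)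

theorem phase_sub (u v : Fin 2 → ZMod 3) (x δ : Fin 18 → ZMod 3) :
    phase u x - phase v (x - δ) = x ⬝ᵥ tw δ (u - v) +
      (δ ⬝ᵥ (Matrix.of adj *ᵥ δ) + δ ⬝ᵥ (Matrix.of bm *ᵥ v)) := by
  have ht : tw δ (u - v) = Matrix.of adj *ᵥ δ + Matrix.of bm *ᵥ (u - v) := rfl
  have hsymm : δ ⬝ᵥ (Matrix.of adj *ᵥ x) = x ⬝ᵥ (Matrix.of adj *ᵥ δ) := by
    have hT : (Matrix.of adj)ᵀ = Matrix.of adj := by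
      ext i j
      exact adj_symm j i
    rw [dotProduct_mulVec, ← mulVec_transpose, hT, dotProduct_comm]
  rw [ht]
  simp only [phase, mulVec_sub, dotProduct_sub, sub_dotProduct, dotProduct_add, hsymm]
  have h3 : (3 : ZMod 3) = 0 := by decide
  linear_combination (-(x ⬝ᵥ (Matrix.of adj *ᵥ δ))) * h3

noncomputable def st (u : Fin 2 → ZMod 3) : H (fun _ : Fin 18 => 3) :=
  fun x => ZMod.stdAddChar (N := 3) (phase u (vec x))

theorem sum_char (t : ZMod 3) :
    (∑ y : ZMod 3, (ZMod.stdAddChar (N := 3) (y * t) : ℂ)) = if t = 0 then 3 else 0 := by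
  have := AddChar.sum_mulShift t (ZMod.isPrimitive_stdAddChar 3)
  simpa using this

theorem char_sum_prod (f : Fin 18 → ZMod 3) (T : Finset (Fin 18)) :
    (ZMod.stdAddChar (N := 3) (∑ i ∈ T, f i) : ℂ) = ∏ i ∈ T, ZMod.stdAddChar (N := 3) (f i) := by
  induction T using Finset.induction_on with
  | empty => simp
  | insert i T hi ih =>
    rw [Finset.sum_insert hi, Finset.prod_insert hi, AddChar.map_add_eq_mul, ih]

theorem char_sum_fixed (S : Finset (Fin 18)) (a : Cfg (fun _ : Fin 18 => 3))
    (t : Fin 18 → ZMod 3) :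
    (∑ x : Cfg (fun _ : Fin 18 => 3), if Agree _ S x a then
      (ZMod.stdAddChar (N := 3) (vec x ⬝ᵥ t) : ℂ) else 0) =
      ∏ i, if i ∈ S then (ZMod.stdAddChar (N := 3) (vec a i * t i) : ℂ)
        else if t i = 0 then 3 else 0 := by
  have := sum_fixed (fun _ : Fin 18 => 3) S a
    (fun i y => (ZMod.stdAddChar (N := 3) ((show ZMod 3 from y) * t i) : ℂ))
  refine Eq.trans (Finset.sum_congr rfl fun x _ => ?_) (this.trans ?_)
  · refine if_congr Iff.rfl ?_ rfl
    rw [dotProduct, char_sum_prod]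
    rfl
  · refine Finset.prod_congr rfl fun i _ => if_congr Iff.rfl rfl ?_
    exact sum_char (t i)

theorem st_KP : KP (fun _ : Fin 18 => 3) 5 ((3 : ℂ) ^ 18) st := by
  intro S hS a b u v
  let δ : Fin 18 → ZMod 3 := S.piecewise (vec a - vec b) 0
  let c : ZMod 3 := δ ⬝ᵥ (Matrix.of adj *ᵥ δ) + δ ⬝ᵥ (Matrix.of bm *ᵥ v)
  have hterm : ∀ x : Cfg (fun _ : Fin 18 => 3),
      (if Agree _ S x a then st u x * conj (st v (S.piecewise b x)) else 0) =
      (ZMod.stdAddChar (N := 3) c : ℂ) * if Agree _ S x a then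
        (ZMod.stdAddChar (N := 3) (vec x ⬝ᵥ tw δ (u - v)) : ℂ) else 0 := by
    intro x
    split_ifs with hx
    · have hp : vec (S.piecewise b x) = vec x - δ := by
        funext i
        by_cases hi : i ∈ S
        · have h1 : δ i = vec a i - vec b i :=
            Finset.piecewise_eq_of_mem _ _ _ hi
          have h0 : vec (S.piecewise b x) i = vec b i := Finset.piecewise_eq_of_mem _ _ _ hi
          rw [h0, Pi.sub_apply, h1]
          have h2 : vec x i = vec a i := hx i hi
          rw [h2, sub_sub_cancel]
        · have h1 : δ i = 0 := Finset.piecewise_eq_of_notMem _ _ _ hi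
          have h0 : vec (S.piecewise b x) i = vec x i := Finset.piecewise_eq_of_notMem _ _ _ hi
          rw [h0, Pi.sub_apply, h1, sub_zero]
      have hs : st v (S.piecewise b x) =
          ZMod.stdAddChar (N := 3) (phase v (vec x - δ)) := by
        rw [← hp]
        rfl
      rw [hs, ← AddChar.map_neg_eq_conj]
      have hu : st u x = ZMod.stdAddChar (N := 3) (phase u (vec x)) := rfl
      rw [hu, ← AddChar.map_add_eq_mul, ← sub_eq_add_neg, phase_sub, ← AddChar.map_add_eq_mul,
        add_comm]
    · rw [mul_zero]
  rw [Finset.sum_congr rfl fun x _ => hterm x, ← Finset.mul_sum, char_sum_fixed]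
  by_cases hcase : u = v ∧ Agree _ S a b
  · rw [if_pos hcase]
    have hδ : δ = 0 := by
      funext i
      by_cases hi : i ∈ S
      · have h1 : δ i = vec a i - vec b i :=
          Finset.piecewise_eq_of_mem _ _ _ hi
        have h2 : vec a i = vec b i := hcase.2 i hi
        rw [h1, h2, sub_self]
        rfl
      · exact Finset.piecewise_eq_of_notMem _ _ _ hi
    have hc : c = 0 := by
      simp [c, hδ]
    have ht : tw δ (u - v) = 0 := by
      funext i
      simp [tw, hδ, hcase.1]
    rw [hc, ht, AddChar.map_zero_eq_one, one_mul, eq_mul_inv_iff_mul_eq₀ (by simp)]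
    have e1 : (∏ i ∈ S, ((3 : ℕ) : ℂ)) = ∏ i : Fin 18, if i ∈ S then (3 : ℂ) else 1 := by
      rw [Finset.prod_ite_mem, Finset.univ_inter]
      rfl
    rw [e1, ← Finset.prod_mul_distrib]
    have e2 : ∀ i : Fin 18, ((if i ∈ S then
        (ZMod.stdAddChar (N := 3) (vec a i * (0 : Fin 18 → ZMod 3) i) : ℂ)
        else if (0 : Fin 18 → ZMod 3) i = 0 then 3 else 0) *
        if i ∈ S then (3 : ℂ) else 1) = 3 := by
      intro i
      split_ifs <;> simp_all
    rw [Finset.prod_congr rfl fun i _ => e2 i]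
    simp
  · rw [if_neg hcase]
    have hex : ∃ i ∉ S, tw δ (u - v) i ≠ 0 := by
      by_contra hcon
      push Not at hcon
      obtain ⟨h1, h2⟩ := distance S hS δ (u - v)
        (fun i hi => Finset.piecewise_eq_of_notMem _ _ _ hi) hcon
      apply hcase
      refine ⟨sub_eq_zero.mp h2, fun i hi => ?_⟩
      have h3 : δ i = vec a i - vec b i :=
        Finset.piecewise_eq_of_mem _ _ _ hi
      rw [h1] at h3
      exact sub_eq_zero.mp h3.symm
    obtain ⟨i, hi, hti⟩ := hex
    rw [Finset.prod_eq_zero (Finset.mem_univ i), mul_zero]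
    rw [if_neg hi, if_neg hti]

theorem exists_attach (κ : Type) [Fintype κ] [DecidableEq κ] (m : ℕ)
    (hm : m * 2 ^ Fintype.card κ ≤ 9) :
    ∃ W : Submodule ℂ (H (Sum.elim (fun _ : κ => 2) (fun _ : Fin 18 => 3))),
      IsUniformSubspace (Sum.elim (fun _ : κ => 2) (fun _ : Fin 18 => 3)) 5 W ∧
      Module.finrank ℂ W = m := by
  obtain ⟨e⟩ : Nonempty (Fin m × (κ → Fin 2) ↪ (Fin 2 → ZMod 3)) := by
    apply Function.Embedding.nonempty_of_card_le
    simpa [ZMod.card] using hm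
  have h := st_KP.attach e
  have x0 : Cfg (Sum.elim (fun _ : κ => 2) (fun _ : Fin 18 => 3)) := fun i =>
    match i with
    | .inl _ => (0 : Fin 2)
    | .inr _ => (0 : Fin 3)
  have := h.exists_subspace (by simp) x0
  simpa using this

end Code

end RUnif

open RUnif in
/-- There exists a 9-dimensional 5-uniform subspace of `(ℂ³)^{⊗18}`
(a pure code `((18, 9, 6))₃`), a 4-dimensional 5-uniform subspace of `ℂ² ⊗ (ℂ³)^{⊗18}`,
and a 2-dimensional 5-uniform subspace of `(ℂ²)^{⊗2} ⊗ (ℂ³)^{⊗18}`. -/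
theorem statement19 :
    (∃ W : Submodule ℂ (H (fun _ : Fin 18 => 3)),
      IsUniformSubspace (fun _ : Fin 18 => 3) 5 W ∧ Module.finrank ℂ W = 9) ∧
    (∃ W : Submodule ℂ (H (Sum.elim (fun _ : Unit => 2) (fun _ : Fin 18 => 3))),
      IsUniformSubspace (Sum.elim (fun _ : Unit => 2) (fun _ : Fin 18 => 3)) 5 W ∧
      Module.finrank ℂ W = 4) ∧
    (∃ W : Submodule ℂ (H (Sum.elim (fun _ : Fin 2 => 2) (fun _ : Fin 18 => 3))),
      IsUniformSubspace (Sum.elim (fun _ : Fin 2 => 2) (fun _ : Fin 18 => 3)) 5 W ∧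
      Module.finrank ℂ W = 2) := by
  refine ⟨?_, Code.exists_attach Unit 4 (by simp), Code.exists_attach (Fin 2) 2 (by simp)⟩
  have := Code.st_KP.exists_subspace (by simp) (fun _ => (0 : Fin 3))
  simpa [ZMod.card] using this
end
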